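/- Let C be a cover of the generalised quadrangle Q(4,q), q even, of size q^2 + 1 + r with 0 < r < (q+4)/6. Then C contains a spread of Q(4,q); equivalently, every blocking set of Q(4,q), q even, of size q^2+1+r with 0 < r < (q+4)/6 contains an ovoid. -/

import Mathlib

/-!
The proof takes place in the symplectic quadrangle `W(q)`: the points of `PG(3,q)` with the totally
isotropic lines of an alternating form on `F^4`. In characteristic two, projecting `F^5` from the
nucleus of the parabolic form identifies `Q(4,q)` with `W(q)` (`blocking_half`), while the spin
representation `cl` of `F^5` on `F^4` identifies `Q(4,q)` with the dual of `W(q)` (`cover_half`): a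
vector of `F^4` is sent to the line of `Q(4,q)` annihilating it. Hence blocking sets and covers of
`Q(4,q)` are both blocking sets of `W(q)`, and everything reduces to `blocking_contains_ovoid`.

Let `g` be a weight on the points of `PG(3,q)` of total `q^2 + 1 + r` that is at least one on every
totally isotropic line. The excess `exc g P` is the total of `g(ℓ) - 1` over the totally isotropic
lines `ℓ` on `P`. If no plane consisted of points of positive excess, then every point of positive
excess would lie on at least `q + 1 - r` lines consisting of such points, and for `6 * r < q + 4` some
plane would contain more of these lines than its total excess permits. So there is a plane, polar
to `Y` say, of points of positive excess, and this forces every totally isotropic line on `Y` to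
have weight at least two. Lowering the weight of `Y` by one and iterating yields a nonnegative
weight `E` of total `r` such that `f = g - E` is exactly one on every totally isotropic line
(`exists_decomposition`).

It remains to see that `f` is nonnegative (`weight_nonneg`): then `f` takes only the values `0` and
`1`, and its support is an ovoid contained in the blocking set. Here the parity of `q` enters. A
line of negative weight that is orthogonal to no point of negative weight would produce, in a
plane, a `(q + 2)`-set having more than `q / 2` internal nuclei and a line meeting it in three
points, contrary to `no_three_collinear`. The latter rests on polynomial identities over `F` in
characteristic two: at every nucleus a sum of reciprocals vanishes, which makes the derivative of
a polynomial of small degree vanish identically. Consequently a point `Y` with `f Y < 0` would lie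
on too few lines of negative weight in the polar plane of a point of weight one orthogonal to `Y`.
-/

open scoped Classical

noncomputable section

variable (F : Type*) [Field F] [Fintype F]

/-- The standard non-singular parabolic quadratic form on `F^5` defining `Q(4,q)`. -/
def Q4Form : (Fin 5 → F) → F := fun v => v 0 * v 1 + v 2 * v 3 + v 4 ^ 2

/-- Points of the parabolic quadric `Q(4,q)`: singular projective points, i.e.
one-dimensional subspaces on which the form vanishes. -/
def Q4Point := {W : Submodule F (Fin 5 → F) //
  Module.finrank F W = 1 ∧ ∀ v ∈ W, Q4Form F v = 0}

/-- Lines of the parabolic quadric `Q(4,q)`: totally singular two-dimensional subspaces. -/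
def Q4Line := {W : Submodule F (Fin 5 → F) //
  Module.finrank F W = 2 ∧ ∀ v ∈ W, Q4Form F v = 0}

/-! ### The symplectic polarity of `PG(3,q)` and counting -/

section Geometry

variable {F : Type*} [Field F]

/-- The standard alternating form `x₀y₁ - x₁y₀ + x₂y₃ - x₃y₂` on `F^4`. -/
def symp (F : Type*) [Field F] : LinearMap.BilinForm F (Fin 4 → F) :=
  LinearMap.mk₂ F (fun x y => x 0 * y 1 - x 1 * y 0 + x 2 * y 3 - x 3 * y 2)
    (by intros; simp; ring) (by intros; simp; ring) (by intros; simp; ring) (by intros; simp; ring)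

lemma symp_apply (x y : Fin 4 → F) :
    symp F x y = x 0 * y 1 - x 1 * y 0 + x 2 * y 3 - x 3 * y 2 := rfl

lemma symp_self (x : Fin 4 → F) : symp F x x = 0 := by rw [symp_apply]; ring

lemma symp_neg (x y : Fin 4 → F) : symp F x y = - symp F y x := by simp only [symp_apply]; ring

lemma symp_refl : (symp F).IsRefl := by
  intro x y h; rw [symp_neg, h, neg_zero]

lemma symp_nondeg : (symp F).Nondegenerate := by
  have key : ∀ x : Fin 4 → F, (∀ y, symp F x y = 0) → x = 0 := by
    intro x h
    have h0 := h (Pi.single 1 1)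
    have h1 := h (Pi.single 0 1)
    have h2 := h (Pi.single 3 1)
    have h3 := h (Pi.single 2 1)
    simp [symp_apply] at h0 h1 h2 h3
    ext i
    fin_cases i <;> simp [*]
  refine ⟨key, fun x h => key x fun y => ?_⟩
  rw [symp_neg, h, neg_zero]

/-- The symplectic polarity of `PG(3,q)`. -/
def perp (U : Submodule F (Fin 4 → F)) : Submodule F (Fin 4 → F) := (symp F).orthogonal U

lemma mem_perp {U : Submodule F (Fin 4 → F)} {v : Fin 4 → F} :
    v ∈ perp U ↔ ∀ u ∈ U, symp F u v = 0 := Iff.rfl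

lemma finrank_perp (U : Submodule F (Fin 4 → F)) :
    Module.finrank F (perp U) = 4 - Module.finrank F U := by
  rw [perp, LinearMap.BilinForm.finrank_orthogonal symp_nondeg]; simp

@[simp] lemma perp_perp (U : Submodule F (Fin 4 → F)) : perp (perp U) = U :=
  LinearMap.BilinForm.orthogonal_orthogonal symp_nondeg symp_refl U

lemma le_perp_comm {U V : Submodule F (Fin 4 → F)} : U ≤ perp V ↔ V ≤ perp U := by
  constructor <;> intro h x hx y hy <;> exact symp_refl _ _ (h hy x hx)

lemma perp_anti {U V : Submodule F (Fin 4 → F)} (h : U ≤ V) : perp V ≤ perp U :=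
  fun _ hx y hy => hx y (h hy)

lemma perp_sup (U V : Submodule F (Fin 4 → F)) : perp (U ⊔ V) = perp U ⊓ perp V := by
  apply le_antisymm
  · exact le_inf (perp_anti le_sup_left) (perp_anti le_sup_right)
  · rw [le_perp_comm]
    exact sup_le (le_perp_comm.1 inf_le_left) (le_perp_comm.1 inf_le_right)

/-- Points of `PG(3,q)`. -/
abbrev Pt (F : Type*) [Field F] := {W : Submodule F (Fin 4 → F) // Module.finrank F W = 1}

/-- Lines of `PG(3,q)`. -/
abbrev Ln (F : Type*) [Field F] := {W : Submodule F (Fin 4 → F) // Module.finrank F W = 2}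

/-- The polar line of a line. -/
def Ln.pol (L : Ln F) : Ln F := ⟨perp L.1, by rw [finrank_perp, L.2]⟩

@[simp] lemma Ln.pol_val (L : Ln F) : L.pol.1 = perp L.1 := rfl

@[simp] lemma Ln.pol_pol (L : Ln F) : L.pol.pol = L := Subtype.ext (perp_perp _)

lemma Pt.exists_span (P : Pt F) : ∃ v, v ≠ 0 ∧ P.1 = Submodule.span F {v} := by
  obtain ⟨v, hv, h⟩ := finrank_eq_one_iff'.1 P.2
  refine ⟨v, by simpa using hv, ?_⟩
  apply le_antisymm
  · intro w hw
    obtain ⟨c, hc⟩ := h ⟨w, hw⟩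
    exact Submodule.mem_span_singleton.2 ⟨c, congrArg Subtype.val hc⟩
  · rw [Submodule.span_singleton_le_iff_mem]; exact v.2

/-- The point spanned by a nonzero vector. -/
def Pt.mk' (v : Fin 4 → F) (hv : v ≠ 0) : Pt F := ⟨Submodule.span F {v}, finrank_span_singleton hv⟩

lemma Pt.mk'_le {v : Fin 4 → F} (hv : v ≠ 0) {U : Submodule F (Fin 4 → F)} :
    (Pt.mk' v hv).1 ≤ U ↔ v ∈ U := Submodule.span_singleton_le_iff_mem _ _

lemma Pt.eq_of_le {P Q : Pt F} (h : P.1 ≤ Q.1) : P = Q :=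
  Subtype.ext (Submodule.eq_of_le_of_finrank_le h (by rw [P.2, Q.2]))

lemma Pt.le_perp_self (P : Pt F) : P.1 ≤ perp P.1 := by
  obtain ⟨v, hv, h⟩ := P.exists_span
  rw [h, Submodule.span_singleton_le_iff_mem, mem_perp]
  intro u hu
  obtain ⟨c, rfl⟩ := Submodule.mem_span_singleton.1 hu
  simp [symp_self]

lemma Ln.eq_of_le {L M : Ln F} (h : L.1 ≤ M.1) : L = M :=
  Subtype.ext (Submodule.eq_of_le_of_finrank_le h (by rw [L.2, M.2]))

lemma Pt.finrank_sup {P Q : Pt F} (h : P ≠ Q) :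
    Module.finrank F (P.1 ⊔ Q.1 : Submodule F (Fin 4 → F)) = 2 := by
  have h1 := Submodule.finrank_sup_add_finrank_inf_eq P.1 Q.1
  have h2 : Module.finrank F (P.1 ⊓ Q.1 : Submodule F (Fin 4 → F)) = 0 := by
    by_contra h0
    apply h
    have h3 : P.1 ⊓ Q.1 = P.1 := Submodule.eq_of_le_of_finrank_le inf_le_left (by rw [P.2]; omega)
    exact Pt.eq_of_le (inf_eq_left.1 h3)
  rw [P.2, Q.2] at h1
  omega

/-- The line joining two distinct points. -/
def Pt.join (P Q : Pt F) (h : P ≠ Q) : Ln F := ⟨P.1 ⊔ Q.1, Pt.finrank_sup h⟩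

lemma Pt.join_le {P Q : Pt F} (h : P ≠ Q) {U : Submodule F (Fin 4 → F)} :
    (P.join Q h).1 ≤ U ↔ P.1 ≤ U ∧ Q.1 ≤ U := sup_le_iff

lemma Pt.eq_join {P Q : Pt F} (h : P ≠ Q) {L : Ln F} (hP : P.1 ≤ L.1) (hQ : Q.1 ≤ L.1) :
    L = P.join Q h := (Ln.eq_of_le ((Pt.join_le h).2 ⟨hP, hQ⟩)).symm

lemma Ln.unique {P Q : Pt F} (h : P ≠ Q) {L M : Ln F} (hP : P.1 ≤ L.1) (hQ : Q.1 ≤ L.1)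
    (hP' : P.1 ≤ M.1) (hQ' : Q.1 ≤ M.1) : L = M := by
  rw [Pt.eq_join h hP hQ, Pt.eq_join h hP' hQ']

lemma exists_pt_le {U : Submodule F (Fin 4 → F)} (h : 0 < Module.finrank F U) :
    ∃ P : Pt F, P.1 ≤ U := by
  have : U ≠ ⊥ := by rintro rfl; simp at h
  obtain ⟨v, hv, h0⟩ := Submodule.exists_mem_ne_zero_of_ne_bot this
  exact ⟨Pt.mk' v h0, (Pt.mk'_le h0).2 hv⟩

lemma finrank_plane (R : Pt F) : Module.finrank F (perp R.1) = 3 := by rw [finrank_perp, R.2]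

/-- Every line meets every plane. -/
lemma exists_meet (L : Ln F) (R : Pt F) : ∃ P : Pt F, P.1 ≤ L.1 ∧ P.1 ≤ perp R.1 := by
  have h1 := Submodule.finrank_sup_add_finrank_inf_eq L.1 (perp R.1)
  have h2 := Submodule.finrank_le (L.1 ⊔ perp R.1)
  rw [L.2, finrank_plane] at h1
  simp at h2
  obtain ⟨P, hP⟩ := exists_pt_le (U := L.1 ⊓ perp R.1) (by omega)
  exact ⟨P, le_inf_iff.1 hP⟩

lemma exists_meet_lines {L M : Ln F} {R : Pt F} (hL : L.1 ≤ perp R.1) (hM : M.1 ≤ perp R.1) :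
    ∃ P : Pt F, P.1 ≤ L.1 ∧ P.1 ≤ M.1 := by
  have h1 := Submodule.finrank_sup_add_finrank_inf_eq L.1 M.1
  have h2 := Submodule.finrank_mono (sup_le hL hM)
  rw [L.2, M.2] at h1
  rw [finrank_plane] at h2
  obtain ⟨P, hP⟩ := exists_pt_le (U := L.1 ⊓ M.1) (by omega)
  exact ⟨P, le_inf_iff.1 hP⟩

lemma Ln.le_plane {P Q R : Pt F} (h : P ≠ Q) {L : Ln F} (hP : P.1 ≤ L.1) (hQ : Q.1 ≤ L.1)
    (hP' : P.1 ≤ perp R.1) (hQ' : Q.1 ≤ perp R.1) : L.1 ≤ perp R.1 := by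
  rw [Pt.eq_join h hP hQ, Pt.join_le]; exact ⟨hP', hQ'⟩

lemma pt_perp_comm {P Q : Pt F} : P.1 ≤ perp Q.1 ↔ Q.1 ≤ perp P.1 := le_perp_comm

lemma Ln.exists_ne (L : Ln F) (P : Pt F) : ∃ Q : Pt F, Q ≠ P ∧ Q.1 ≤ L.1 := by
  by_contra! h
  have : L.1 ≤ P.1 := by
    intro v hv
    by_cases h0 : v = 0
    · simp [h0]
    · by_contra hvP
      have := (h (Pt.mk' v h0) (fun e => hvP (by rw [← e]; exact (Pt.mk'_le h0).1 le_rfl)))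
      exact this ((Pt.mk'_le h0).2 hv)
  have := Submodule.finrank_mono this
  rw [L.2, P.2] at this; omega

/-- A line is totally isotropic once it lies in the polar plane of one of its points. -/
lemma Ln.ti_of {L : Ln F} {P : Pt F} (h : P.1 ≤ L.1) (h' : L.1 ≤ perp P.1) : L.1 ≤ perp L.1 := by
  obtain ⟨Q, hQ, hQL⟩ := L.exists_ne P
  have e := Pt.eq_join hQ hQL h
  have : perp L.1 = perp Q.1 ⊓ perp P.1 := by
    conv_lhs => rw [e]
    exact perp_sup _ _
  rw [this]
  refine le_inf ?_ h'
  exact Ln.le_plane hQ hQL h Q.le_perp_self (pt_perp_comm.1 (hQL.trans h'))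

lemma Ln.ti_iff {L : Ln F} {P : Pt F} (h : P.1 ≤ L.1) : L.1 ≤ perp L.1 ↔ L.1 ≤ perp P.1 :=
  ⟨fun h' => h'.trans (perp_anti h), Ln.ti_of h⟩

lemma Ln.pol_eq_of_ti {L : Ln F} (h : L.1 ≤ perp L.1) : L.pol = L :=
  (Ln.eq_of_le (M := L.pol) h).symm

lemma pol_le_plane {L : Ln F} {R : Pt F} : L.pol.1 ≤ perp R.1 ↔ R.1 ≤ L.1 := by
  rw [Ln.pol_val, le_perp_comm, perp_perp]

lemma le_plane_iff {L : Ln F} {R : Pt F} : L.1 ≤ perp R.1 ↔ R.1 ≤ L.pol.1 := le_perp_comm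

end Geometry

section Counting

variable {F : Type*} [Field F] [Fintype F]

instance : Fintype (Pt F) := Fintype.ofFinite _
instance : Fintype (Ln F) := Fintype.ofFinite _

/-- The points contained in a subspace. -/
def pts (U : Submodule F (Fin 4 → F)) : Finset (Pt F) := Finset.univ.filter fun P => P.1 ≤ U

@[simp] lemma mem_pts {U : Submodule F (Fin 4 → F)} {P : Pt F} : P ∈ pts U ↔ P.1 ≤ U := by
  simp [pts]

lemma card_pts (U : Submodule F (Fin 4 → F)) :
    (pts U).card * (Fintype.card F - 1) + 1 = Fintype.card F ^ Module.finrank F U := by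
  have h1 : Fintype.card U = Fintype.card F ^ Module.finrank F U := Module.card_eq_pow_finrank
  -- The nonzero vectors of `U` are fibred over the points of `U`, each fibre having `q - 1` vectors.
  let S : Finset (Fin 4 → F) := Finset.univ.filter fun v => v ∈ U ∧ v ≠ 0
  let S' : Finset (Fin 4 → F) := Finset.univ.filter fun v => v ∈ U
  have hS' : S'.card = Fintype.card F ^ Module.finrank F U := by
    rw [← h1, Fintype.card_subtype]
  have hS : S.card + 1 = S'.card := by
    have : S = S'.erase 0 := by ext v; simp [S, S', and_comm]
    rw [this, Finset.card_erase_add_one]; simp [S']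
  rw [← hS', ← hS]
  congr 1
  let f : (Fin 4 → F) → Pt F := fun v =>
    if h : v ≠ 0 then Pt.mk' v h else (exists_pt_le (U := ⊤) (by simp)).choose
  have hf : ∀ v (h : v ≠ 0), f v = Pt.mk' v h := fun v h => by simp only [f, dif_pos h]
  have hmap : ∀ v ∈ S, f v ∈ pts U := by
    intro v hv
    simp only [S, Finset.mem_filter, Finset.mem_univ, true_and] at hv
    rw [hf v hv.2, mem_pts, Pt.mk'_le]; exact hv.1
  rw [Finset.card_eq_sum_card_fiberwise hmap, Finset.sum_const_nat (m := Fintype.card F - 1)]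
  intro P hP
  obtain ⟨v, hv, hPv⟩ := P.exists_span
  have hvU : v ∈ U := by
    rw [mem_pts, hPv, Submodule.span_singleton_le_iff_mem] at hP; exact hP
  have : (S.filter fun w => f w = P) =
      (Finset.univ.erase (0 : F)).image (fun c => c • v) := by
    ext w
    simp only [S, Finset.mem_filter, Finset.mem_univ, true_and, Finset.mem_image, Finset.mem_erase,
      and_true]
    constructor
    · rintro ⟨⟨hw, h0⟩, e⟩
      rw [hf w h0] at e
      have : w ∈ P.1 := by rw [← e]; exact (Pt.mk'_le h0).1 le_rfl
      rw [hPv] at this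
      obtain ⟨c, rfl⟩ := Submodule.mem_span_singleton.1 this
      exact ⟨c, fun hc => h0 (by simp [hc]), rfl⟩
    · rintro ⟨c, hc, rfl⟩
      have h0 : c • v ≠ 0 := smul_ne_zero hc hv
      refine ⟨⟨U.smul_mem _ hvU, h0⟩, ?_⟩
      rw [hf _ h0]
      apply Pt.eq_of_le
      rw [Pt.mk'_le, hPv]
      exact Submodule.mem_span_singleton.2 ⟨c, rfl⟩
  rw [this, Finset.card_image_of_injective _ (smul_left_injective F hv), Finset.card_erase_of_mem
    (Finset.mem_univ _), Finset.card_univ]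

lemma one_lt_q : 1 < Fintype.card F := Fintype.one_lt_card

lemma card_pts_line (L : Ln F) : (pts L.1).card = Fintype.card F + 1 := by
  have h := card_pts L.1
  have h1 := one_lt_q (F := F)
  rw [L.2] at h
  obtain ⟨k, hk⟩ := Nat.exists_eq_add_of_lt h1
  rw [hk] at h ⊢
  have : (pts L.1).card * (k + 1) = (k + 3) * (k + 1) := by
    have : 1 + k + 1 - 1 = k + 1 := by omega
    rw [this] at h; nlinarith
  have := Nat.eq_of_mul_eq_mul_right (by omega) this
  omega

lemma card_pts_plane {U : Submodule F (Fin 4 → F)} (hU : Module.finrank F U = 3) :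
    (pts U).card = 1 + Fintype.card F * (Fintype.card F + 1) := by
  have h := card_pts U
  have h1 := one_lt_q (F := F)
  rw [hU] at h
  obtain ⟨k, hk⟩ := Nat.exists_eq_add_of_lt h1
  rw [hk] at h ⊢
  have h2 : 1 + k + 1 - 1 = k + 1 := by omega
  rw [h2] at h
  refine Nat.eq_of_mul_eq_mul_right (m := k + 1) (by omega) ?_
  nlinarith

lemma card_pts_top : (pts (⊤ : Submodule F (Fin 4 → F))).card =
    1 + Fintype.card F * (Fintype.card F ^ 2 + Fintype.card F + 1) := by
  have h := card_pts (⊤ : Submodule F (Fin 4 → F))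
  have h1 := one_lt_q (F := F)
  simp only [finrank_top, Module.finrank_fintype_fun_eq_card, Fintype.card_fin] at h
  obtain ⟨k, hk⟩ := Nat.exists_eq_add_of_lt h1
  rw [hk] at h ⊢
  have h2 : 1 + k + 1 - 1 = k + 1 := by omega
  rw [h2] at h
  refine Nat.eq_of_mul_eq_mul_right (m := k + 1) (by omega) ?_
  nlinarith

/-- The lines through a point inside a subspace. -/
def lns (X : Pt F) (U : Submodule F (Fin 4 → F)) : Finset (Ln F) :=
  Finset.univ.filter fun L => X.1 ≤ L.1 ∧ L.1 ≤ U

@[simp] lemma mem_lns {X : Pt F} {U : Submodule F (Fin 4 → F)} {L : Ln F} :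
    L ∈ lns X U ↔ X.1 ≤ L.1 ∧ L.1 ≤ U := by simp [lns]

/-- The total weight of a subspace. -/
def wt (g : Pt F → ℤ) (U : Submodule F (Fin 4 → F)) : ℤ := ∑ P ∈ pts U, g P

/-- The lines through `X` in `U` partition the other points of `U`. -/
lemma sum_lns_aux (g : Pt F → ℤ) {X : Pt F} {U : Submodule F (Fin 4 → F)} (hX : X.1 ≤ U) :
    ∑ L ∈ lns X U, wt g L.1 = wt g U + ((lns X U).card - 1) * g X := by
  have h1 : ∀ L ∈ lns X U, wt g L.1 = ∑ P ∈ (pts L.1).erase X, g P + g X := by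
    intro L hL
    rw [wt, Finset.sum_erase_add _ _ (mem_pts.2 (mem_lns.1 hL).1)]
  rw [Finset.sum_congr rfl h1, Finset.sum_add_distrib, Finset.sum_const, wt,
    ← Finset.sum_erase_add _ _ (mem_pts.2 hX)]
  have h2 : ∑ L ∈ lns X U, ∑ P ∈ (pts L.1).erase X, g P = ∑ P ∈ (pts U).erase X, g P := by
    rw [← Finset.sum_biUnion]
    · congr 1
      ext P
      simp only [Finset.mem_biUnion, mem_lns, Finset.mem_erase, mem_pts]
      constructor
      · rintro ⟨L, ⟨h1, h2⟩, h3, h4⟩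
        exact ⟨h3, h4.trans h2⟩
      · rintro ⟨h3, h4⟩
        exact ⟨P.join X h3, ⟨le_sup_right, (Pt.join_le h3).2 ⟨h4, hX⟩⟩, h3, le_sup_left⟩
    · intro L hL M hM hLM
      rw [Function.onFun, Finset.disjoint_left]
      intro P hP hP'
      simp only [Finset.mem_erase, mem_pts, Finset.mem_coe, mem_lns] at hP hP' hL hM
      exact hLM (Ln.unique hP.1 hP.2 hL.1 hP'.2 hM.1)
  rw [h2]
  simp
  ring

lemma card_lns {X : Pt F} {U : Submodule F (Fin 4 → F)} (hX : X.1 ≤ U) {k : ℕ}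
    (hU : (pts U).card = 1 + Fintype.card F * k) : (lns X U).card = k := by
  have h := sum_lns_aux (fun _ => 1) hX
  have h1 : ∀ L : Ln F, wt (fun _ => 1) L.1 = Fintype.card F + 1 := by
    intro L; simp [wt, card_pts_line]
  have h2 : wt (fun _ => 1) U = 1 + Fintype.card F * k := by simp [wt, hU]
  simp only [h1, h2, Finset.sum_const, nsmul_eq_mul, mul_one] at h
  have h3 : (Fintype.card F : ℤ) * (lns X U).card = Fintype.card F * k := by linarith
  have h4 : (Fintype.card F : ℤ) ≠ 0 := by exact_mod_cast Fintype.card_ne_zero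
  exact_mod_cast mul_left_cancel₀ h4 h3

lemma card_lns_plane {X R : Pt F} (h : X.1 ≤ perp R.1) :
    (lns X (perp R.1)).card = Fintype.card F + 1 :=
  card_lns h (card_pts_plane (finrank_plane R))

lemma card_lns_top (X : Pt F) : (lns X ⊤).card = Fintype.card F ^ 2 + Fintype.card F + 1 :=
  card_lns le_top card_pts_top

lemma sum_lns_plane (g : Pt F → ℤ) {X R : Pt F} (h : X.1 ≤ perp R.1) :
    ∑ L ∈ lns X (perp R.1), wt g L.1 = wt g (perp R.1) + Fintype.card F * g X := by
  rw [sum_lns_aux g h, card_lns_plane h]; push_cast; ring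

lemma sum_lns_top (g : Pt F → ℤ) (X : Pt F) :
    ∑ L ∈ lns X ⊤, wt g L.1 =
      wt g ⊤ + (Fintype.card F ^ 2 + Fintype.card F) * g X := by
  rw [sum_lns_aux g le_top, card_lns_top]; push_cast; ring

/-- The number of points in which a line meets a plane. -/
lemma card_meet (L : Ln F) (R : Pt F) :
    ((pts L.1).filter fun P => P.1 ≤ perp R.1).card =
      1 + if R.1 ≤ L.pol.1 then Fintype.card F else 0 := by
  split_ifs with h
  · rw [← le_plane_iff] at h
    rw [Finset.filter_true_of_mem, card_pts_line, add_comm]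
    intro P hP
    exact (mem_pts.1 hP).trans h
  · obtain ⟨P, h1, h2⟩ := exists_meet L R
    rw [add_zero, Finset.card_eq_one]
    refine ⟨P, ?_⟩
    ext Q
    simp only [Finset.mem_filter, mem_pts, Finset.mem_singleton]
    refine ⟨fun hQ => ?_, fun e => e ▸ ⟨h1, h2⟩⟩
    by_contra hne
    exact h (le_plane_iff.1 (Ln.le_plane hne hQ.1 h1 hQ.2 h2))

/-- The polar planes of the points of `L` are the planes through the polar line of `L`. -/
lemma sum_planes (g : Pt F → ℤ) (L : Ln F) :
    ∑ P ∈ pts L.1, wt g (perp P.1) = wt g ⊤ + Fintype.card F * wt g L.pol.1 := by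
  have h1 : ∀ U : Submodule F (Fin 4 → F), wt g U = ∑ R, if R.1 ≤ U then g R else 0 := by
    intro U; rw [wt, pts, Finset.sum_filter]
  simp only [h1]
  rw [Finset.sum_comm, Finset.mul_sum, ← Finset.sum_add_distrib]
  refine Finset.sum_congr rfl fun R _ => ?_
  have h2 : ∀ P ∈ pts L.1, (if R.1 ≤ perp P.1 then g R else 0) =
      if P.1 ≤ perp R.1 then g R else 0 := fun P _ => by simp only [pt_perp_comm]
  rw [Finset.sum_congr rfl h2, ← Finset.sum_filter, Finset.sum_const, card_meet,
    if_pos (le_top : R.1 ≤ ⊤)]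
  split_ifs <;> simp <;> ring

end Counting

/-! ### The excess of a weighted blocking set is a sum of pencils -/

section Excess

variable {F : Type*} [Field F] [Fintype F]

local notation "q" => (Fintype.card F : ℤ)

/-- The total excess `∑ (g(ℓ) - 1)` over the totally isotropic lines `ℓ` on `P`; the
definition evaluates this sum through the polar plane of `P`. -/
def exc (g : Pt F → ℤ) (P : Pt F) : ℤ := wt g (perp P.1) + q * g P - (q + 1)

/-- The excess of a pair of polar lines; on a totally isotropic line it is `2 (g(L) - 1)`. -/
def pairExc (g : Pt F → ℤ) (L : Ln F) : ℤ := wt g L.1 + wt g L.pol.1 - 2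

lemma exc_eq_sum (g : Pt F → ℤ) (P : Pt F) :
    exc g P = ∑ L ∈ lns P (perp P.1), (wt g L.1 - 1) := by
  rw [Finset.sum_sub_distrib, sum_lns_plane g P.le_perp_self, exc]
  simp [card_lns_plane P.le_perp_self]

lemma ti_of_mem_lns {P : Pt F} {L : Ln F} (h : L ∈ lns P (perp P.1)) : L.1 ≤ perp L.1 :=
  Ln.ti_of (mem_lns.1 h).1 (mem_lns.1 h).2

lemma pairExc_ti {g : Pt F → ℤ} {L : Ln F} (h : L.1 ≤ perp L.1) :
    pairExc g L = 2 * (wt g L.1 - 1) := by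
  rw [pairExc, Ln.pol_eq_of_ti h]; ring

variable {g : Pt F → ℤ} {r : ℤ}

lemma exc_nonneg (hti : ∀ L : Ln F, L.1 ≤ perp L.1 → 1 ≤ wt g L.1) (P : Pt F) : 0 ≤ exc g P := by
  rw [exc_eq_sum]
  refine Finset.sum_nonneg fun L hL => ?_
  have := hti L (ti_of_mem_lns hL)
  omega

lemma wt_exc_line (htot : wt g ⊤ = q ^ 2 + 1 + r) (L : Ln F) :
    wt (exc g) L.1 = r + q * pairExc g L := by
  have h1 := sum_planes g L
  have h2 : wt (exc g) L.1 =
      ∑ P ∈ pts L.1, wt g (perp P.1) + q * wt g L.1 - (q + 1) * (q + 1) := by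
    simp only [wt, exc, Finset.sum_sub_distrib, Finset.sum_add_distrib, ← Finset.mul_sum]
    simp [card_pts_line]
    ring
  rw [h2, h1, htot, pairExc]; ring

lemma pairExc_nonneg (htot : wt g ⊤ = q ^ 2 + 1 + r)
    (hti : ∀ L : Ln F, L.1 ≤ perp L.1 → 1 ≤ wt g L.1) (hr : r < q) (L : Ln F) :
    0 ≤ pairExc g L := by
  have h1 := wt_exc_line htot L
  have h2 : 0 ≤ wt (exc g) L.1 := Finset.sum_nonneg fun P _ => exc_nonneg hti P
  by_contra! h
  nlinarith

lemma wt_exc_plane (htot : wt g ⊤ = q ^ 2 + 1 + r) (R : Pt F) :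
    wt (exc g) (perp R.1) = r * (q + 1) + q * exc g R := by
  have h1 := sum_lns_plane (exc g) R.le_perp_self
  have h2 : ∑ L ∈ lns R (perp R.1), wt (exc g) L.1 =
      ∑ L ∈ lns R (perp R.1), (r + q * (2 * (wt g L.1 - 1))) := by
    refine Finset.sum_congr rfl fun L hL => ?_
    rw [wt_exc_line htot, pairExc_ti (ti_of_mem_lns hL)]
  rw [h2, Finset.sum_add_distrib, ← Finset.mul_sum, ← Finset.mul_sum, ← exc_eq_sum] at h1
  simp only [Finset.sum_const, card_lns_plane R.le_perp_self, nsmul_eq_mul] at h1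
  push_cast at h1
  linarith

lemma sum_pairExc (htot : wt g ⊤ = q ^ 2 + 1 + r) {X R : Pt F} (h : X.1 ≤ perp R.1) :
    ∑ L ∈ lns X (perp R.1), pairExc g L = exc g R + exc g X := by
  have h1 := sum_lns_plane (exc g) h
  simp only [wt_exc_line htot, wt_exc_plane htot, Finset.sum_add_distrib, ← Finset.mul_sum,
    Finset.sum_const, card_lns_plane h, nsmul_eq_mul] at h1
  push_cast at h1
  have h4 : q ≠ 0 := by exact_mod_cast Fintype.card_ne_zero
  apply mul_left_cancel₀ h4
  linarith

lemma sum_exc (htot : wt g ⊤ = q ^ 2 + 1 + r) : wt (exc g) ⊤ = r * (q + 1) ^ 2 := by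
  have h1 : ∑ P ∈ pts (⊤ : Submodule F (Fin 4 → F)), wt g (perp P.1) =
      (1 + q * (q + 1)) * wt g ⊤ := by
    have e : ∀ P : Pt F, wt g (perp P.1) = ∑ R, if P.1 ≤ perp R.1 then g R else 0 := by
      intro P; simp only [wt, pts, Finset.sum_filter, pt_perp_comm]
    simp only [e]
    rw [Finset.sum_comm, wt, Finset.mul_sum]
    have : pts (⊤ : Submodule F (Fin 4 → F)) = Finset.univ := by ext; simp
    rw [this]
    refine Finset.sum_congr rfl fun R _ => ?_
    rw [← Finset.sum_filter, Finset.sum_const]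
    change (pts (perp R.1)).card • g R = _
    rw [card_pts_plane (finrank_plane R)]
    simp
  have h2 : wt (exc g) ⊤ = (1 + q * (q + 1)) * wt g ⊤ + q * wt g ⊤ -
      (1 + q * (q ^ 2 + q + 1)) * (q + 1) := by
    simp only [exc, wt, Finset.sum_sub_distrib, Finset.sum_add_distrib, ← Finset.mul_sum] at h1 ⊢
    rw [h1]
    simp only [Finset.sum_const, card_pts_top, nsmul_eq_mul]
    push_cast
    ring
  rw [h2, htot]; ring

/-- A line all of whose points have positive excess. -/
def IsFull (g : Pt F → ℤ) (L : Ln F) : Prop := ∀ X : Pt F, X.1 ≤ L.1 → 1 ≤ exc g X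

/-- If a plane contains a point of excess zero, its pole has excess at most `r`. -/
lemma exc_le_of_zero (htot : wt g ⊤ = q ^ 2 + 1 + r)
    (hti : ∀ L : Ln F, L.1 ≤ perp L.1 → 1 ≤ wt g L.1) (hr0 : 0 ≤ r) {X R : Pt F}
    (h : R.1 ≤ perp X.1) (hR : exc g R = 0) : exc g X ≤ r := by
  by_cases hne : X = R
  · rw [hne, hR]; exact hr0
  set L := X.join R hne
  have hL : X.1 ≤ L.1 ∧ R.1 ≤ L.1 := (Pt.join_le hne).1 le_rfl
  have hLR : L ∈ lns R (perp R.1) :=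
    mem_lns.2 ⟨hL.2, (Pt.join_le hne).2 ⟨pt_perp_comm.1 h, R.le_perp_self⟩⟩
  have hw : wt g L.1 - 1 = 0 := by
    rw [exc_eq_sum] at hR
    exact (Finset.sum_eq_zero_iff_of_nonneg
      (fun M hM => by have := hti M (ti_of_mem_lns hM); omega)).1 hR L hLR
  have h1 := wt_exc_line htot L
  rw [pairExc_ti (ti_of_mem_lns hLR), hw] at h1
  have h2 : exc g X ≤ wt (exc g) L.1 :=
    Finset.single_le_sum (f := exc g) (fun P _ => exc_nonneg hti P) (mem_pts.2 hL.1)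
  linarith

/-- A point of excess between `1` and `r` lies on at least `q + 1 - r` full lines. -/
lemma many_full (htot : wt g ⊤ = q ^ 2 + 1 + r)
    (hti : ∀ L : Ln F, L.1 ≤ perp L.1 → 1 ≤ wt g L.1) (hr : r < q)
    {Q : Pt F} (hQ : 1 ≤ exc g Q) (hQr : exc g Q ≤ r) :
    q + 1 - r ≤ ((Finset.univ.filter fun L : Ln F => Q.1 ≤ L.1 ∧ IsFull g L).card : ℤ) := by
  -- a totally isotropic line through `Q` without excess
  obtain ⟨l, hl, hlw⟩ : ∃ l ∈ lns Q (perp Q.1), wt g l.1 - 1 = 0 := by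
    by_contra! h
    have h1 : ∑ L ∈ lns Q (perp Q.1), (1 : ℤ) ≤ exc g Q := by
      rw [exc_eq_sum]
      refine Finset.sum_le_sum fun L hL => ?_
      have := h L hL
      have := hti L (ti_of_mem_lns hL)
      omega
    rw [Finset.sum_const, card_lns_plane Q.le_perp_self] at h1
    simp at h1
    omega
  have hlti := ti_of_mem_lns hl
  obtain ⟨hQl, -⟩ := mem_lns.1 hl
  have hla : pairExc g l = 0 := by rw [pairExc_ti hlti, hlw]; rfl
  set Z := (pts l.1).filter fun R => exc g R = 0
  set N := (pts l.1).filter fun R => ¬ exc g R = 0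
  have hZN : Z.card + N.card = Fintype.card F + 1 := by
    rw [Finset.card_filter_add_card_filter_not, card_pts_line]
  have hN : (N.card : ℤ) ≤ r := by
    have h1 : ∑ R ∈ N, (1 : ℤ) ≤ ∑ R ∈ N, exc g R := by
      refine Finset.sum_le_sum fun R hR => ?_
      have := (Finset.mem_filter.1 hR).2
      have := exc_nonneg hti R
      omega
    have h2 : ∑ R ∈ N, exc g R ≤ wt (exc g) l.1 :=
      Finset.sum_le_sum_of_subset_of_nonneg (Finset.filter_subset _ _)
        fun R _ _ => exc_nonneg hti R
    rw [wt_exc_line htot, hla] at h2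
    simp at h1
    linarith
  -- each zero `R` of `l` yields a full line through `Q` in the polar plane of `R`
  have hex : ∀ R ∈ Z, ∃ L : Ln F, (Q.1 ≤ L.1 ∧ L.1 ≤ perp R.1) ∧ 1 ≤ pairExc g L := by
    intro R hR
    obtain ⟨hRl, hR0⟩ := Finset.mem_filter.1 hR
    have hQR : Q.1 ≤ perp R.1 := hQl.trans (hlti.trans (perp_anti (mem_pts.1 hRl)))
    have h1 := sum_pairExc htot hQR
    by_contra! h
    have : ∑ L ∈ lns Q (perp R.1), pairExc g L ≤ 0 :=
      Finset.sum_nonpos fun L hL => by have := h L (mem_lns.1 hL); omega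
    omega
  have : Nonempty (Ln F) := ⟨l⟩
  choose! φ hφ1 hφ2 using hex
  have hcard : Z.card ≤ (Finset.univ.filter fun L : Ln F => Q.1 ≤ L.1 ∧ IsFull g L).card := by
    refine Finset.card_le_card_of_injOn φ ?_ ?_
    · intro R hR
      have hR' := (Finset.mem_filter.1 (Finset.mem_coe.1 hR)).2
      simp only [Finset.coe_filter, Finset.mem_univ, true_and, Set.mem_ofPred_eq]
      refine ⟨(hφ1 R hR).1, fun X hX => ?_⟩
      have h1 := sum_pairExc htot (hX.trans (hφ1 R hR).2)
      have h2 : pairExc g (φ R) ≤ ∑ L ∈ lns X (perp R.1), pairExc g L :=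
        Finset.single_le_sum (f := pairExc g) (fun L _ => pairExc_nonneg htot hti hr L)
          (mem_lns.2 ⟨hX, (hφ1 R hR).2⟩)
      have := hφ2 R hR
      omega
    · intro R hR R' hR' e
      by_contra hne
      -- otherwise `φ R` would be polar to the line `R R' = l`, hence equal to `l`
      have h1 := mem_pts.1 (Finset.mem_filter.1 (Finset.mem_coe.1 hR)).1
      have h2 := mem_pts.1 (Finset.mem_filter.1 (Finset.mem_coe.1 hR')).1
      have h3 := le_plane_iff.1 (hφ1 R hR).2
      have h4 := le_plane_iff.1 (hφ1 R' hR').2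
      rw [← e] at h4
      have h5 : l = (φ R).pol := Ln.unique hne h1 h2 h3 h4
      have h6 : φ R = l := by rw [← Ln.pol_pol (φ R), ← h5, Ln.pol_eq_of_ti hlti]
      have := hφ2 R hR
      rw [h6, hla] at this
      omega
  omega

/-- `s` lines in a plane cover at least `s (q + 1) - s (s - 1) / 2` points. -/
lemma cover_bound {T : Finset (Ln F)} {D : Finset (Pt F)} (hD : ∀ L ∈ T, ∀ P : Pt F, P.1 ≤ L.1 → P ∈ D) :
    2 * (T.card * (q + 1)) - T.card * (T.card - 1) ≤ 2 * (D.card : ℤ) := by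
  let n : Pt F → ℤ := fun P => ∑ L ∈ T, if P.1 ≤ L.1 then 1 else 0
  have h1 : ∑ P ∈ D, n P = T.card * (q + 1) := by
    simp only [n]
    rw [Finset.sum_comm, Finset.sum_congr rfl (g := fun _ => q + 1), Finset.sum_const,
      nsmul_eq_mul]
    intro L hL
    rw [← Finset.sum_filter]
    have : D.filter (fun P => P.1 ≤ L.1) = pts L.1 := by
      ext P
      simp only [Finset.mem_filter, mem_pts, and_iff_right_iff_imp]
      exact hD L hL P
    rw [this]
    simp [card_pts_line]
  have h2 : ∑ P ∈ D, n P * n P ≤ T.card * (q + 1) + T.card * (T.card - 1) := by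
    have e : ∑ P ∈ D, n P * n P =
        ∑ L ∈ T, ∑ M ∈ T, ((D.filter fun P => P.1 ≤ L.1 ∧ P.1 ≤ M.1).card : ℤ) := by
      simp only [n, Finset.sum_mul_sum]
      rw [Finset.sum_comm]
      refine Finset.sum_congr rfl fun L _ => ?_
      rw [Finset.sum_comm]
      refine Finset.sum_congr rfl fun M _ => ?_
      rw [Finset.card_filter]
      push_cast
      refine Finset.sum_congr rfl fun P _ => ?_
      by_cases h : P.1 ≤ L.1 <;> by_cases h' : P.1 ≤ M.1 <;> simp [h, h']
    rw [e]
    have h3 : ∀ L ∈ T, ∑ M ∈ T, ((D.filter fun P => P.1 ≤ L.1 ∧ P.1 ≤ M.1).card : ℤ) ≤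
        (q + 1) + (T.card - 1) := by
      intro L hL
      rw [← Finset.add_sum_erase T _ hL]
      have hc : ((T.erase L).card : ℤ) = T.card - 1 := by
        rw [Finset.card_erase_of_mem hL, Nat.cast_sub (Finset.card_pos.2 ⟨L, hL⟩)]; simp
      refine add_le_add ?_ ?_
      · have : (D.filter fun P => P.1 ≤ L.1 ∧ P.1 ≤ L.1) ⊆ pts L.1 := by
          intro P hP
          exact mem_pts.2 (Finset.mem_filter.1 hP).2.1
        have := Finset.card_le_card this
        rw [card_pts_line] at this
        exact_mod_cast this
      · rw [← hc, Finset.card_eq_sum_ones]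
        push_cast
        refine Finset.sum_le_sum fun M hM => ?_
        have : (D.filter fun P => P.1 ≤ L.1 ∧ P.1 ≤ M.1).card ≤ 1 := by
          rw [Finset.card_le_one]
          intro P hP P' hP'
          by_contra hne
          have a := (Finset.mem_filter.1 hP).2
          have b := (Finset.mem_filter.1 hP').2
          exact (Finset.mem_erase.1 hM).1 (Ln.unique hne a.2 b.2 a.1 b.1)
        exact_mod_cast this
    refine (Finset.sum_le_sum h3).trans ?_
    rw [Finset.sum_const, nsmul_eq_mul]
    exact le_of_eq (by ring)
  -- `3 * n - n ^ 2 ≤ 2` for every integer `n`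
  have h3 : ∑ P ∈ D, (3 * n P - n P * n P) ≤ ∑ P ∈ D, (2 : ℤ) := by
    refine Finset.sum_le_sum fun P _ => ?_
    rcases le_or_gt (n P) 1 with h | h <;> nlinarith
  rw [Finset.sum_sub_distrib, ← Finset.mul_sum, h1] at h3
  simp only [Finset.sum_const, nsmul_eq_mul] at h3
  linarith

/-- Some plane consists of points of positive excess. Otherwise all excesses are at most `r`, and
every point of positive excess lies on many full lines; counting the full lines meeting a fixed one
yields a plane containing so many that `cover_bound` exceeds the excess of the plane. -/
lemma exists_full_plane (htot : wt g ⊤ = q ^ 2 + 1 + r)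
    (hti : ∀ L : Ln F, L.1 ≤ perp L.1 → 1 ≤ wt g L.1) (hr0 : 0 < r) (hr : 6 * r < q + 4) :
    ∃ Y : Pt F, ∀ X : Pt F, X.1 ≤ perp Y.1 → 1 ≤ exc g X := by
  have hq1 : 1 < q := by exact_mod_cast one_lt_q (F := F)
  have hrq : r < q := by omega
  by_contra! hcon
  have hsmall : ∀ X, exc g X ≤ r := by
    intro X
    obtain ⟨R, hR, hR0⟩ := hcon X
    exact exc_le_of_zero htot hti hr0.le hR (by have := exc_nonneg hti R; omega)
  have hmany : ∀ Q : Pt F, 1 ≤ exc g Q →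
      q + 1 - r ≤ ((Finset.univ.filter fun L : Ln F => Q.1 ≤ L.1 ∧ IsFull g L).card : ℤ) :=
    fun Q hQ => many_full htot hti hrq hQ (hsmall Q)
  -- a full line `h` exists
  obtain ⟨h, hh⟩ : ∃ h : Ln F, IsFull g h := by
    obtain ⟨P0, -⟩ := exists_pt_le (F := F) (U := ⊤) (by simp)
    have hne : (lns P0 (perp P0.1)).Nonempty := by
      rw [← Finset.card_pos, card_lns_plane P0.le_perp_self]; omega
    obtain ⟨L0, -⟩ := hne
    obtain ⟨Q, hQ⟩ : ∃ Q : Pt F, 1 ≤ exc g Q := by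
      by_contra! hz
      have h1 := wt_exc_line htot L0
      have h2 : wt (exc g) L0.1 ≤ 0 := Finset.sum_nonpos fun P _ => by have := hz P; omega
      have h3 := pairExc_nonneg htot hti hrq L0
      nlinarith
    have h1 := hmany Q hQ
    have h2 : 0 < (Finset.univ.filter fun L : Ln F => Q.1 ≤ L.1 ∧ IsFull g L).card := by omega
    obtain ⟨L, hL⟩ := Finset.card_pos.1 h2
    exact ⟨L, (Finset.mem_filter.1 hL).2.2⟩
  -- count the full lines meeting `h`, first by their points on `h`, then by the planes on `h`
  set T : Pt F → Finset (Ln F) := fun S =>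
    Finset.univ.filter fun L => (IsFull g L ∧ L ≠ h) ∧ L.1 ≤ perp S.1
  set K : Pt F → Finset (Ln F) := fun X =>
    Finset.univ.filter fun L => (IsFull g L ∧ L ≠ h) ∧ X.1 ≤ L.1
  have hK : ∀ X ∈ pts h.1, q - r ≤ ((K X).card : ℤ) := by
    intro X hX
    have h1 := hmany X (hh X (mem_pts.1 hX))
    have h2 : (Finset.univ.filter fun L : Ln F => X.1 ≤ L.1 ∧ IsFull g L) = insert h (K X) := by
      ext L
      simp only [K, Finset.mem_filter, Finset.mem_univ, true_and, Finset.mem_insert]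
      constructor
      · rintro ⟨a, b⟩
        by_cases e : L = h
        · exact Or.inl e
        · exact Or.inr ⟨⟨b, e⟩, a⟩
      · rintro (rfl | ⟨⟨b, e⟩, a⟩)
        · exact ⟨mem_pts.1 hX, hh⟩
        · exact ⟨a, b⟩
    rw [h2, Finset.card_insert_of_notMem (by simp [K])] at h1
    push_cast at h1
    omega
  have hUK : ((pts h.1).biUnion K).card = ∑ X ∈ pts h.1, (K X).card := by
    refine Finset.card_biUnion fun X hX Y hY hXY => ?_
    rw [Function.onFun, Finset.disjoint_left]
    intro L hL hL'
    have a := (Finset.mem_filter.1 hL).2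
    have b := (Finset.mem_filter.1 hL').2
    exact a.1.2 (Ln.unique hXY a.2 b.2 (mem_pts.1 hX) (mem_pts.1 hY))
  have hsub : (pts h.1).biUnion K ⊆ (pts h.pol.1).biUnion T := by
    intro L hL
    obtain ⟨X, hX, hL⟩ := Finset.mem_biUnion.1 hL
    have a := (Finset.mem_filter.1 hL).2
    obtain ⟨S, hS1, hS2⟩ := exists_meet_lines (pol_le_plane.2 (mem_pts.1 hX))
      (pol_le_plane.2 a.2)
    refine Finset.mem_biUnion.2 ⟨S, mem_pts.2 hS1, Finset.mem_filter.2 ⟨Finset.mem_univ _, a.1, ?_⟩⟩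
    exact le_plane_iff.2 hS2
  have hle := (Finset.card_le_card hsub).trans Finset.card_biUnion_le
  rw [hUK] at hle
  obtain ⟨S, hS, hTS⟩ : ∃ S ∈ pts h.pol.1, q - r ≤ ((T S).card : ℤ) := by
    by_contra! hlt
    have h1 : ∑ X ∈ pts h.1, (q - r) ≤ ∑ X ∈ pts h.1, ((K X).card : ℤ) := Finset.sum_le_sum hK
    have h2 : ∑ S ∈ pts h.pol.1, ((T S).card : ℤ) < ∑ S ∈ pts h.pol.1, (q - r) := by
      refine Finset.sum_lt_sum_of_nonempty ?_ hlt
      rw [← Finset.card_pos, card_pts_line]; omega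
    have h3 : ∑ X ∈ pts h.1, ((K X).card : ℤ) ≤ ∑ S ∈ pts h.pol.1, ((T S).card : ℤ) := by
      exact_mod_cast hle
    simp only [Finset.sum_const, card_pts_line] at h1 h2
    omega
  -- the plane polar to `S` contains too many full lines
  have hhT : h ∉ T S := by simp [T]
  have hcard : (q + 1 - r).toNat ≤ (insert h (T S)).card := by
    rw [Finset.card_insert_of_notMem hhT]; omega
  obtain ⟨T', hT', hT'c⟩ := Finset.exists_subset_card_eq hcard
  set D := (pts (perp S.1)).filter fun X => 1 ≤ exc g X
  have hT1 : ∀ L ∈ T', L.1 ≤ perp S.1 ∧ IsFull g L := by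
    intro L hL
    rcases Finset.mem_insert.1 (hT' hL) with rfl | hL
    · exact ⟨le_plane_iff.2 (mem_pts.1 hS), hh⟩
    · have a := (Finset.mem_filter.1 hL).2
      exact ⟨a.2, a.1.1⟩
  have h1 := cover_bound (T := T') (D := D) (fun L hL P hP =>
    Finset.mem_filter.2 ⟨mem_pts.2 (hP.trans (hT1 L hL).1), (hT1 L hL).2 P hP⟩)
  have h2 : (D.card : ℤ) ≤ wt (exc g) (perp S.1) := by
    rw [Finset.card_eq_sum_ones]; push_cast
    refine (Finset.sum_le_sum (g := exc g) fun X hX => (Finset.mem_filter.1 hX).2).trans ?_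
    exact Finset.sum_le_sum_of_subset_of_nonneg (Finset.filter_subset _ _)
      fun R _ _ => exc_nonneg hti R
  rw [wt_exc_plane htot] at h2
  have h3 := hsmall S
  have h4 : (T'.card : ℤ) = q + 1 - r := by omega
  rw [h4] at h1
  nlinarith

/-- The excess of a weighted blocking set contains the pencil of some point. -/
lemma exists_pencil (htot : wt g ⊤ = q ^ 2 + 1 + r)
    (hti : ∀ L : Ln F, L.1 ≤ perp L.1 → 1 ≤ wt g L.1) (hr0 : 0 < r) (hr : 6 * r < q + 4) :
    ∃ Y : Pt F, ∀ L : Ln F, L.1 ≤ perp L.1 → Y.1 ≤ L.1 → 2 ≤ wt g L.1 := by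
  obtain ⟨Y, hY⟩ := exists_full_plane htot hti hr0 hr
  have hq1 : 1 < q := by exact_mod_cast one_lt_q (F := F)
  refine ⟨Y, fun L hL hYL => ?_⟩
  by_contra! hlt
  have h1 : wt g L.1 - 1 = 0 := by have := hti L hL; omega
  have h2 := wt_exc_line htot L
  rw [pairExc_ti hL, h1] at h2
  have h3 : ∑ X ∈ pts L.1, (1 : ℤ) ≤ wt (exc g) L.1 :=
    Finset.sum_le_sum fun X hX => hY X ((mem_pts.1 hX).trans (hL.trans (perp_anti hYL)))
  simp [card_pts_line] at h3
  omega

lemma wt_sub (f g : Pt F → ℤ) (U : Submodule F (Fin 4 → F)) :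
    wt (fun P => f P - g P) U = wt f U - wt g U := Finset.sum_sub_distrib _ _

lemma wt_single (Y : Pt F) (U : Submodule F (Fin 4 → F)) :
    wt (fun P => if P = Y then 1 else 0) U = if Y.1 ≤ U then 1 else 0 := by
  simp [wt]

/-- The excess of a weighted blocking set is a sum of pencils: subtracting a suitable nonnegative
weight `E` of total weight `n` makes all totally isotropic lines have weight one. -/
lemma exists_decomposition (n : ℕ) : ∀ g : Pt F → ℤ, wt g ⊤ = q ^ 2 + 1 + n →
    (∀ L : Ln F, L.1 ≤ perp L.1 → 1 ≤ wt g L.1) → 6 * (n : ℤ) < q + 4 →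
    ∃ E : Pt F → ℤ, (∀ P, 0 ≤ E P) ∧ wt E ⊤ = n ∧
      ∀ L : Ln F, L.1 ≤ perp L.1 → wt (fun P => g P - E P) L.1 = 1 := by
  induction n with
  | zero =>
    intro g htot hti _
    have hq1 : 1 < q := by exact_mod_cast one_lt_q (F := F)
    refine ⟨fun _ => 0, by simp, by simp [wt], fun L hL => ?_⟩
    simp only [sub_zero]
    obtain ⟨P, hP⟩ := exists_pt_le (F := F) (U := L.1) (by rw [L.2]; omega)
    have hsum := sum_exc htot
    have h0 : exc g P = 0 := by
      have := (Finset.sum_eq_zero_iff_of_nonneg (s := pts (⊤ : Submodule F (Fin 4 → F)))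
        (fun Q _ => exc_nonneg hti Q)).1 (by rw [← wt, hsum]; simp) P (mem_pts.2 le_top)
      exact this
    rw [exc_eq_sum] at h0
    have := (Finset.sum_eq_zero_iff_of_nonneg
      (fun M hM => by have := hti M (ti_of_mem_lns hM); omega)).1 h0 L
      (mem_lns.2 ⟨hP, hL.trans (perp_anti hP)⟩)
    change wt g L.1 = 1
    omega
  | succ n ih =>
    intro g htot hti hn
    push_cast at htot hn
    obtain ⟨Y, hY⟩ := exists_pencil htot hti (by omega) hn
    obtain ⟨E, hE0, hE1, hE2⟩ := ih (fun P => g P - if P = Y then 1 else 0)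
      (by rw [wt_sub, wt_single, htot]; simp; ring)
      (by
        intro L hL
        rw [wt_sub, wt_single]
        have := hti L hL
        split_ifs with h
        · have := hY L hL h; omega
        · omega)
      (by omega)
    refine ⟨fun P => E P + if P = Y then 1 else 0, fun P => ?_, ?_, fun L hL => ?_⟩
    · have := hE0 P
      dsimp only
      split_ifs <;> omega
    · have : wt (fun P => E P + if P = Y then 1 else 0) ⊤ =
          wt E ⊤ + wt (fun P => if P = Y then 1 else 0) ⊤ := Finset.sum_add_distrib
      rw [this, wt_single, hE1]; simp
    · refine Eq.trans ?_ (hE2 L hL)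
      congr 1
      ext P
      ring

end Excess

/-! ### Affine nuclei in characteristic two -/

section Nuclei

variable {F : Type*} [Field F] [Fintype F]

open Polynomial in
lemma sum_eval_eq_zero {p : F[X]} (hp : p.natDegree < Fintype.card F - 1) :
    ∑ t : F, p.eval t = 0 := by
  simp only [eval_eq_sum_range]
  rw [Finset.sum_comm]
  refine Finset.sum_eq_zero fun i hi => ?_
  rw [← Finset.mul_sum, FiniteField.sum_pow_lt_card_sub_one, mul_zero]
  have := Finset.mem_range.1 hi
  omega

lemma sum_id_eq_zero (hq : 2 < Fintype.card F) : ∑ t : F, t = 0 := by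
  have := sum_eval_eq_zero (p := (Polynomial.X : Polynomial F)) (by simp; omega)
  simpa using this

lemma sum_inv_eq_zero (hq : 2 < Fintype.card F) : ∑ t : F, t⁻¹ = 0 := by
  rw [← sum_id_eq_zero hq]
  exact Fintype.sum_equiv (Equiv.inv F) _ _ fun _ => rfl

open Polynomial in
/-- If the slopes of the graph of `h` at each of at least `q / 2` of its points sum to zero, then
so do the values of `h`. -/
lemma sum_eq_zero_of_slopes [CharP F 2] (hq : 2 < Fintype.card F) (h : F → F) (M : Finset F)
    (hM : Fintype.card F ≤ 2 * M.card)
    (hs : ∀ c ∈ M, ∑ t ∈ Finset.univ.erase c, (h t - h c) / (t - c) = 0) : ∑ t, h t = 0 := by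
  set p : F[X] := Lagrange.interpolate Finset.univ id h with hp
  have hev : ∀ t, p.eval t = h t := fun t =>
    Lagrange.eval_interpolate_at_node h Function.injective_id.injOn (Finset.mem_univ t)
  have hdeg : p.degree < Fintype.card F := by
    have := Lagrange.degree_interpolate_lt h (Function.injective_id (α := F)).injOn
      (s := Finset.univ)
    rwa [Finset.card_univ] at this
  have hnat : p.natDegree ≤ Fintype.card F - 1 := by
    have := natDegree_le_of_degree_le hdeg.le
    by_cases h0 : p = 0
    · simp [h0]
    · have := (natDegree_lt_iff_degree_lt h0).2 hdeg
      omega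
  -- the sum of the slopes at `c` is `- p' (c)`
  have hder : ∀ c ∈ M, (derivative p).eval c = 0 := by
    intro c hc
    obtain ⟨g, hg⟩ : (X - C c) ∣ p - C (p.eval c) := by
      rw [dvd_iff_isRoot]; simp
    have hg' : p = (X - C c) * g + C (p.eval c) := by rw [← hg]; ring
    have hgd : g.natDegree < Fintype.card F - 1 := by
      by_cases h0 : g = 0
      · simp [h0]; omega
      · have h1 : (p - C (p.eval c)).natDegree = 1 + g.natDegree := by
          rw [hg, natDegree_mul (X_sub_C_ne_zero c) h0, natDegree_X_sub_C]
        have h2 : (p - C (p.eval c)).natDegree ≤ Fintype.card F - 1 := by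
          rw [natDegree_sub_C]; exact hnat
        omega
    have h1 : (derivative p).eval c = g.eval c := by
      rw [hg']; simp
    have h2 := sum_eval_eq_zero hgd
    rw [← Finset.sum_erase_add _ _ (Finset.mem_univ c)] at h2
    have h3 : ∑ t ∈ Finset.univ.erase c, g.eval t = 0 := by
      rw [← hs c hc]
      refine Finset.sum_congr rfl fun t ht => ?_
      have h0 : t - c ≠ 0 := sub_ne_zero.2 (Finset.ne_of_mem_erase ht)
      rw [eq_div_iff h0, ← hev t, ← hev c]
      have := congrArg (eval t) hg
      simp at this
      rw [this]; ring
    rw [h1]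
    rw [h3, zero_add] at h2
    exact h2
  -- in characteristic two, `p'` is a polynomial `f` of degree less than `q / 2` in `X ^ 2`
  set f := contract 2 (derivative p) with hf
  have hexp : expand F 2 f = derivative p := by
    refine expand_contract 2 ?_ (by norm_num)
    ext n
    rw [coeff_derivative, coeff_derivative, coeff_zero]
    have : ((n + 1 + 1 : ℕ) : F) * ((n + 1 : ℕ) : F) = 0 := by
      rw [← Nat.cast_mul, CharP.cast_eq_zero_iff F 2]
      rw [mul_comm]
      exact (Nat.even_mul_succ_self (n + 1)).two_dvd
    push_cast at this ⊢
    linear_combination (p.coeff (n + 1 + 1)) * this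
  have hfd : f.natDegree * 2 ≤ Fintype.card F - 2 := by
    rw [← natDegree_expand, hexp]
    have := natDegree_derivative_le p
    omega
  have hf0 : f = 0 := by
    by_contra h0
    have h1 : M.image (fun c => c ^ 2) ⊆ f.roots.toFinset := by
      intro d hd
      obtain ⟨c, hc, rfl⟩ := Finset.mem_image.1 hd
      rw [Multiset.mem_toFinset, mem_roots h0, IsRoot, ← expand_eval, hexp, hder c hc]
    have h2 := (Finset.card_le_card h1).trans ((Multiset.toFinset_card_le _).trans (card_roots' f))
    rw [Finset.card_image_of_injective _ (show Function.Injective fun c : F => c ^ 2 from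
      frobenius_inj F 2)] at h2
    omega
  have hp0 : derivative p = 0 := by rw [← hexp, hf0, map_zero]
  have hco : p.coeff (Fintype.card F - 1) = 0 := by
    have h1 := congrArg (fun g => coeff g (Fintype.card F - 2)) hp0
    simp only [coeff_derivative, coeff_zero] at h1
    have e : Fintype.card F - 2 + 1 = Fintype.card F - 1 := by omega
    have h2 : ((Fintype.card F - 2 : ℕ) : F) + 1 ≠ 0 := by
      have h3 : ((Fintype.card F - 2 : ℕ) : F) = 0 := by
        rw [Nat.cast_sub hq.le, Nat.cast_card_eq_zero, Nat.cast_ofNat, CharTwo.two_eq_zero]; simp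
      rw [h3]; simp
    rw [e] at h1
    exact (mul_eq_zero.1 h1).resolve_right h2
  have hlt : p.natDegree < Fintype.card F - 1 := by
    refine lt_of_le_of_ne hnat fun e => ?_
    have h1 : p.leadingCoeff = 0 := by rw [leadingCoeff, e]; exact hco
    rw [leadingCoeff_eq_zero] at h1
    rw [h1] at e
    simp at e
    omega
  rw [← sum_eval_eq_zero hlt]
  exact Finset.sum_congr rfl fun t _ => (hev t).symm

variable {ι : Type*}

/-- An injective map from a `(q - 1)`-set to the nonzero elements of `F` takes each value once, so
its values sum to zero. -/
lemma sum_eq_zero_of_injOn (hq : 2 < Fintype.card F) {s : Finset ι} {f : ι → F}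
    (hs : s.card + 1 = Fintype.card F) (h0 : ∀ x ∈ s, f x ≠ 0)
    (hf : Set.InjOn f s) : ∑ x ∈ s, f x = 0 := by
  have h1 : s.image f = Finset.univ.erase 0 := by
    apply Finset.eq_of_subset_of_card_le
    · intro y hy
      obtain ⟨x, hx, rfl⟩ := Finset.mem_image.1 hy
      exact Finset.mem_erase.2 ⟨h0 x hx, Finset.mem_univ _⟩
    · rw [Finset.card_image_of_injOn hf, Finset.card_erase_of_mem (Finset.mem_univ _),
        Finset.card_univ]
      omega
  rw [← Finset.sum_image (f := fun y => y) hf, h1]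
  have := sum_id_eq_zero hq
  rwa [← Finset.sum_erase_add _ _ (Finset.mem_univ 0), add_zero] at this

variable [Fintype ι] {u w : ι → F} {N : Finset ι}

/-- At an affine nucleus `A` of a `(q + 1)`-set the reciprocals of the horizontal distances sum to
zero. The projective map `(x, y) ↦ (slope from A, reciprocal horizontal distance)` turns the set
minus `A` into the graph of a function, and the remaining nuclei into points where the slopes of
that graph sum to zero, so that `sum_eq_zero_of_slopes` applies. -/
lemma sum_inv_nucleus [CharP F 2] (hq : 2 < Fintype.card F)
    (hι : Fintype.card ι = Fintype.card F + 1) (hN : Fintype.card F + 2 ≤ 2 * N.card)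
    (h1 : ∀ A ∈ N, ∀ x, x ≠ A → u x ≠ u A)
    (h2 : ∀ A ∈ N, ∀ x y, x ≠ A → y ≠ A → x ≠ y →
      (u x - u A) * (w y - w A) ≠ (u y - u A) * (w x - w A)) {A : ι} (hA : A ∈ N) :
    ∑ x ∈ Finset.univ.erase A, (u x - u A)⁻¹ = 0 := by
  set m : ι → F := fun x => (w x - w A) / (u x - u A) with hm
  set h : ι → F := fun x => (u x - u A)⁻¹ with hh
  have hd : ∀ x, x ≠ A → u x - u A ≠ 0 := fun x hx => sub_ne_zero.2 (h1 A hA x hx)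
  have hinj : Set.InjOn m (Finset.univ.erase A : Finset ι) := by
    intro x hx y hy e
    have hx := hd x (Finset.ne_of_mem_erase hx)
    by_contra hxy
    have hy' := hd y (Finset.ne_of_mem_erase hy)
    rw [hm] at e
    simp only at e
    rw [div_eq_div_iff hx hy'] at e
    refine h2 A hA x y ?_ (Finset.ne_of_mem_erase hy) hxy ?_
    · rintro rfl; simp at hx
    · linear_combination -e
  have hcard : (Finset.univ.erase A : Finset ι).card = Fintype.card F := by
    rw [Finset.card_erase_of_mem (Finset.mem_univ _), Finset.card_univ, hι]; rfl
  have himg : (Finset.univ.erase A).image m = Finset.univ :=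
    Finset.eq_univ_of_card _ (by rw [Finset.card_image_of_injOn hinj, hcard])
  -- `H` is the function whose graph consists of the points `(m x, h x)`
  set H : F → F := fun t => ∑ x ∈ Finset.univ.erase A, if m x = t then h x else 0 with hH
  have hHm : ∀ x, x ≠ A → H (m x) = h x := by
    intro x hx
    rw [hH]
    simp only
    rw [Finset.sum_eq_single_of_mem x (by simp [hx])]
    · simp
    · intro y hy hyx
      rw [if_neg]
      intro e
      exact hyx (hinj (by simpa using hy) (by simp [hx]) e)
  have key := sum_eq_zero_of_slopes hq H ((N.erase A).image m) ?_ ?_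
  · rw [← himg, Finset.sum_image hinj] at key
    rw [← key]
    exact Finset.sum_congr rfl fun x hx => (hHm x (Finset.ne_of_mem_erase hx)).symm
  · rw [Finset.card_image_of_injOn (hinj.mono (by
      intro x hx; simp at hx ⊢; tauto)), Finset.card_erase_of_mem hA]
    omega
  · intro d hd'
    obtain ⟨c, hc, rfl⟩ := Finset.mem_image.1 hd'
    obtain ⟨hcA, hcN⟩ := Finset.mem_erase.1 hc
    have e1 : (Finset.univ.erase (m c) : Finset F) = ((Finset.univ.erase A).erase c).image m := by
      rw [← himg]
      ext t
      simp only [Finset.mem_erase, Finset.mem_image, Finset.mem_univ, and_true]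
      constructor
      · rintro ⟨ht, x, hx, rfl⟩
        exact ⟨x, ⟨fun e => ht (by rw [e]), hx⟩, rfl⟩
      · rintro ⟨x, ⟨hxc, hx⟩, rfl⟩
        exact ⟨fun e => hxc (hinj (by simpa using hx) (by simpa using hcA) e), x, hx, rfl⟩
    rw [e1, Finset.sum_image (hinj.mono (by intro x hx; simp at hx ⊢; tauto))]
    -- the slope at `c` in terms of the original coordinates
    have hsl : ∀ x ∈ (Finset.univ.erase A).erase c, (H (m x) - H (m c)) / (m x - m c) =
        (u c - u x) / ((w x - w A) * (u c - u A) - (w c - w A) * (u x - u A)) ∧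
        (w x - w A) * (u c - u A) - (w c - w A) * (u x - u A) ≠ 0 := by
      intro x hx
      simp only [Finset.mem_erase, Finset.mem_univ, and_true] at hx
      have hxd := hd x hx.2
      have hcd := hd c hcA
      have hcr : (w x - w A) * (u c - u A) - (w c - w A) * (u x - u A) ≠ 0 := by
        intro e
        exact h2 A hA x c hx.2 hcA hx.1 (by linear_combination -e)
      refine ⟨?_, hcr⟩
      rw [hHm x hx.2, hHm c hcA]
      have e2 : h x - h c = (u c - u x) / ((u x - u A) * (u c - u A)) := by
        simp only [hh]; field_simp; ring
      have e3 : m x - m c = ((w x - w A) * (u c - u A) - (w c - w A) * (u x - u A)) /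
          ((u x - u A) * (u c - u A)) := by
        simp only [hm]; field_simp
      rw [e2, e3, div_div_div_cancel_right₀ (mul_ne_zero hxd hcd)]
    refine sum_eq_zero_of_injOn hq ?_ ?_ ?_
    · rw [Finset.card_erase_of_mem (by simp [hcA]), hcard]; omega
    · intro x hx
      rw [(hsl x hx).1]
      refine div_ne_zero (sub_ne_zero.2 fun e => ?_) (hsl x hx).2
      exact h1 c hcN x (Finset.ne_of_mem_erase hx) e.symm
    · intro x hx y hy e
      simp only at e
      rw [(hsl x hx).1, (hsl y hy).1, div_eq_div_iff (hsl x hx).2 (hsl y hy).2] at e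
      by_contra hxy
      refine h2 c hcN x y (Finset.ne_of_mem_erase hx) (Finset.ne_of_mem_erase hy) hxy ?_
      have hcd := hd c hcA
      apply mul_left_cancel₀ hcd
      linear_combination -e

open Polynomial in
/-- There is no affine `(q + 1)`-set with more than `q / 2` nuclei none of which is on a vertical
secant. Otherwise the abscissae `Z` of the vertical lines meeting the set evenly satisfy
`∑ (t - u A)⁻¹ = 0` over `t ∈ Z` at every nucleus `A`, which gives the derivative of the polynomial
with root set `Z` more roots than its degree allows. Being separable, that polynomial is then
constant; so every vertical line meets the set oddly, contradicting the parity of `q + 1`. -/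
lemma no_affine_nuclei [CharP F 2] (hq : 2 < Fintype.card F)
    (hι : Fintype.card ι = Fintype.card F + 1) (hN : Fintype.card F + 2 ≤ 2 * N.card)
    (h1 : ∀ A ∈ N, ∀ x, x ≠ A → u x ≠ u A)
    (h2 : ∀ A ∈ N, ∀ x y, x ≠ A → y ≠ A → x ≠ y →
      (u x - u A) * (w y - w A) ≠ (u y - u A) * (w x - w A)) : False := by
  set fib : F → Finset ι := fun t => Finset.univ.filter fun x => u x = t with hfib
  have hsum : ∑ t, (fib t).card = Fintype.card F + 1 := by
    rw [← hι, ← Finset.card_univ]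
    exact (Finset.card_eq_sum_card_fiberwise (fun _ _ => Finset.mem_univ _)).symm
  set Z : Finset F := Finset.univ.filter fun t => Even (fib t).card with hZ
  have hZ0 : ∀ A ∈ N, u A ∉ Z := by
    intro A hA
    have : fib (u A) = {A} := by
      ext x
      simp only [hfib, Finset.mem_filter, Finset.mem_univ, true_and, Finset.mem_singleton]
      refine ⟨fun e => ?_, fun e => by rw [e]⟩
      by_contra hx
      exact h1 A hA x hx e
    simp [hZ, this]
  have huN : (N.image u).card = N.card := by
    apply Finset.card_image_of_injOn
    intro x hx y hy e
    by_contra hxy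
    exact h1 y hy x hxy e
  have hZc : Z.card + N.card ≤ Fintype.card F := by
    rw [← huN, ← Finset.card_union_of_disjoint]
    · exact Finset.card_le_univ _
    · rw [Finset.disjoint_right]
      intro t ht
      obtain ⟨A, hA, rfl⟩ := Finset.mem_image.1 ht
      exact hZ0 A hA
  have hZs : ∀ A ∈ N, ∑ t ∈ Z, (t - u A)⁻¹ = 0 := by
    intro A hA
    have e1 : ∑ t, ((fib t).card : F) * (t - u A)⁻¹ = 0 := by
      have := sum_inv_nucleus hq hι hN h1 h2 hA
      have e0 : ∑ x, (u x - u A)⁻¹ = 0 := by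
        rw [← Finset.sum_erase_add _ _ (Finset.mem_univ A), this]; simp
      rw [← e0, ← Finset.sum_fiberwise_of_maps_to (t := Finset.univ) (g := u)
        (fun _ _ => Finset.mem_univ _)]
      refine Finset.sum_congr rfl fun t _ => ?_
      rw [← nsmul_eq_mul, ← Finset.sum_const]
      refine Finset.sum_congr rfl fun x hx => ?_
      rw [(Finset.mem_filter.1 hx).2]
    have e2 : ∑ t : F, (t - u A)⁻¹ = 0 := by
      rw [← sum_inv_eq_zero hq]
      exact Fintype.sum_equiv (Equiv.subRight (u A)) _ _ fun _ => rfl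
    rw [← sub_eq_zero.2 (e2.trans e1.symm), ← Finset.sum_sub_distrib, hZ, Finset.sum_filter]
    refine Finset.sum_congr rfl fun t _ => ?_
    split_ifs with he
    · rw [(CharP.cast_eq_zero_iff F 2 _).2 he.two_dvd]; simp
    · obtain ⟨k, hk⟩ := Nat.not_even_iff_odd.1 he
      have : ((fib t).card : F) = 1 := by
        rw [hk]; push_cast; rw [CharTwo.two_eq_zero]; simp
      rw [this]; simp
  -- the polynomial with root set `Z` has zero derivative
  set χ : F[X] := ∏ t ∈ Z, (X - C t) with hχ
  have hχd : χ.natDegree = Z.card := by rw [hχ, natDegree_finsetProd_X_sub_C_eq_card]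
  have hχ0 : derivative χ = 0 := by
    by_contra h0
    have hr : N.image u ⊆ (derivative χ).roots.toFinset := by
      intro a ha
      obtain ⟨A, hA, rfl⟩ := Finset.mem_image.1 ha
      rw [Multiset.mem_toFinset, mem_roots h0, IsRoot, hχ, derivative_prod_finset, eval_finsetSum]
      have hne : ∀ t ∈ Z, u A - t ≠ 0 := by
        intro t ht e
        rw [sub_eq_zero] at e
        exact hZ0 A hA (e ▸ ht)
      have : ∀ t ∈ Z, eval (u A) ((∏ s ∈ Z.erase t, (X - C s)) * derivative (X - C t)) =
          - (∏ s ∈ Z, (u A - s)) * (t - u A)⁻¹ := by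
        intro t ht
        rw [← Finset.mul_prod_erase _ _ ht]
        have h3 := hne t ht
        have h4 : t - u A ≠ 0 := by rw [← neg_sub]; exact neg_ne_zero.2 h3
        simp [eval_prod]
        field_simp
        ring
      rw [Finset.sum_congr rfl this, ← Finset.mul_sum, hZs A hA, mul_zero]
    have h2 := (Finset.card_le_card hr).trans ((Multiset.toFinset_card_le _).trans (card_roots' _))
    have := natDegree_derivative_le χ
    omega
  have hsep : χ.Separable := by
    rw [hχ]
    exact separable_prod_X_sub_C_iff'.2 fun x _ y _ e => e
  have hZe : Z.card = 0 := by
    rw [Separable, hχ0, isCoprime_zero_right] at hsep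
    rw [← hχd]
    exact natDegree_eq_zero_of_isUnit hsep
  rw [Finset.card_eq_zero] at hZe
  have hodd : ∀ t, Odd (fib t).card := by
    intro t
    rw [← Nat.not_even_iff_odd]
    intro he
    have : t ∈ Z := by simp [hZ, he]
    simp [hZe] at this
  have h3 : (Fintype.card F + 1) % 2 = Fintype.card F % 2 := by
    rw [← hsum, Finset.sum_nat_mod, Finset.sum_congr rfl fun t _ => Nat.odd_iff.1 (hodd t)]
    simp
  omega

end Nuclei

/-! ### Internal nuclei in planes of even order -/

section PlaneNuclei

variable {F : Type*} [Field F] [Fintype F]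

/-- In a plane of even order `q`, let `S` be a `(q + 2)`-set and let `N` be a set of at least
`q / 2 + 1` internal nuclei of `S`: points on no line meeting `S` in three points. Then no line
meets `S` in three points. A point `C` of a trisecant is sent to infinity in the vertical
direction, along a line meeting `S` only in `C`, and `no_affine_nuclei` applies to the rest. -/
lemma no_three_collinear [CharP F 2] (hq : 2 < Fintype.card F) {U : Submodule F (Fin 4 → F)}
    (hU : Module.finrank F U = 3) {S N : Finset (Pt F)} (hSU : ∀ X ∈ S, X.1 ≤ U)
    (hS : S.card = Fintype.card F + 2) (hNS : N ⊆ S) (hN : Fintype.card F + 2 ≤ 2 * N.card)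
    (hnuc : ∀ A ∈ N, ∀ X ∈ S, ∀ Y ∈ S, X ≠ A → Y ≠ A → X ≠ Y → ∀ L : Ln F,
      A.1 ≤ L.1 → X.1 ≤ L.1 → Y.1 ≤ L.1 → False)
    {C X₀ Y₀ : Pt F} (hC : C ∈ S) (hX₀ : X₀ ∈ S) (hY₀ : Y₀ ∈ S) (hXC : X₀ ≠ C) (hYC : Y₀ ≠ C)
    (hXY : X₀ ≠ Y₀) {L₀ : Ln F} (hCL : C.1 ≤ L₀.1) (hXL : X₀.1 ≤ L₀.1) (hYL : Y₀.1 ≤ L₀.1) :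
    False := by
  have hCN : C ∉ N := fun h => hnuc C h X₀ hX₀ Y₀ hY₀ hXC hYC hXY L₀ hCL hXL hYL
  -- a line of the plane through `C` without further points of `S`
  obtain ⟨m, hCm, hmU, hm⟩ : ∃ m : Ln F, C.1 ≤ m.1 ∧ m.1 ≤ U ∧
      ∀ X ∈ S, X ≠ C → ¬ X.1 ≤ m.1 := by
    by_contra! hcon
    have h1 : lns C U ⊆ ((S.erase C).erase Y₀).attach.image fun X => X.1.join C
        (Finset.ne_of_mem_erase (Finset.mem_of_mem_erase X.2)) := by
      intro m hm
      obtain ⟨hCm, hmU⟩ := mem_lns.1 hm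
      obtain ⟨X, hX, hXne, hXm⟩ := hcon m hCm hmU
      rw [Finset.mem_image]
      by_cases hXY0 : X = Y₀
      · refine ⟨⟨X₀, by simp [hX₀, hXC, hXY]⟩, Finset.mem_attach _ _, ?_⟩
        subst hXY0
        have : m = L₀ := Ln.unique hXne hXm hCm hYL hCL
        rw [this]
        exact (Pt.eq_join hXC hXL hCL).symm
      · exact ⟨⟨X, by simp [hX, hXne, hXY0]⟩, Finset.mem_attach _ _,
          (Pt.eq_join hXne hXm hCm).symm⟩
    have h2 := (Finset.card_le_card h1).trans Finset.card_image_le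
    rw [card_lns (hSU C hC) (card_pts_plane hU), Finset.card_attach,
      Finset.card_erase_of_mem (by simp [hY₀, hYC]), Finset.card_erase_of_mem hC] at h2
    omega
  -- affine coordinates with `m` as the line at infinity and `C` as the vertical direction
  obtain ⟨E, hEC, hEm⟩ := m.exists_ne C
  obtain ⟨c, hc0, hc⟩ := C.exists_span
  obtain ⟨e, he0, he⟩ := E.exists_span
  obtain ⟨z, hzU, hzm⟩ : ∃ z ∈ U, z ∉ m.1 := by
    by_contra! h
    have := Submodule.finrank_mono (show U ≤ m.1 from h)
    rw [hU, m.2] at this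
    omega
  have hcC : c ∈ C.1 := by rw [hc]; exact Submodule.mem_span_singleton_self c
  have heE : e ∈ E.1 := by rw [he]; exact Submodule.mem_span_singleton_self e
  have hUeq : m.1 ⊔ Submodule.span F {z} = U := by
    apply Submodule.eq_of_le_of_finrank_le (sup_le hmU (by simpa using hzU))
    have h1 := Submodule.finrank_lt_finrank_of_lt (s := m.1) (t := m.1 ⊔ Submodule.span F {z})
      (lt_of_le_of_ne le_sup_left fun h => hzm (by
        rw [h]; exact Submodule.mem_sup_right (Submodule.mem_span_singleton_self z)))
    rw [m.2] at h1
    omega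
  have hco : ∀ X : {X // X ∈ S.erase C}, ∃ p : F × F, z + p.1 • e + p.2 • c ∈ X.1.1 := by
    rintro ⟨X, hX⟩
    obtain ⟨hXC, hXS⟩ := Finset.mem_erase.1 hX
    obtain ⟨x, hx0, hx⟩ := X.exists_span
    have hxX : x ∈ X.1 := by rw [hx]; exact Submodule.mem_span_singleton_self x
    have hxU := hSU X hXS hxX
    rw [← hUeq] at hxU
    obtain ⟨y, hy, z', hz', rfl⟩ := Submodule.mem_sup.1 hxU
    obtain ⟨a, rfl⟩ := Submodule.mem_span_singleton.1 hz'
    rw [Pt.eq_join hEC hEm hCm, Pt.join] at hy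
    obtain ⟨e', he', c', hc', rfl⟩ := Submodule.mem_sup.1 hy
    rw [he] at he'
    rw [hc] at hc'
    obtain ⟨b, rfl⟩ := Submodule.mem_span_singleton.1 he'
    obtain ⟨d, rfl⟩ := Submodule.mem_span_singleton.1 hc'
    have ha : a ≠ 0 := by
      rintro rfl
      refine hm X hXS hXC ?_
      rw [hx, Submodule.span_singleton_le_iff_mem, zero_smul, add_zero]
      exact m.1.add_mem (m.1.smul_mem _ (hEm heE)) (m.1.smul_mem _ (hCm hcC))
    refine ⟨(a⁻¹ * b, a⁻¹ * d), ?_⟩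
    have := X.1.smul_mem a⁻¹ hxX
    convert this using 1
    simp only [smul_add, smul_smul, inv_mul_cancel₀ ha, one_smul]
    abel
  choose p hp using hco
  have hpne : ∀ X, z + (p X).1 • e + (p X).2 • c ≠ 0 := by
    intro X h0
    apply hzm
    have : z = -((p X).1 • e + (p X).2 • c) := by
      rw [eq_neg_iff_add_eq_zero, ← add_assoc, h0]
    rw [this]
    exact m.1.neg_mem (m.1.add_mem (m.1.smul_mem _ (hEm heE)) (m.1.smul_mem _ (hCm hcC)))
  have hpeq : ∀ X (Y : Submodule F (Fin 4 → F)), z + (p X).1 • e + (p X).2 • c ∈ Y →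
      X.1.1 ≤ Y := by
    intro X Y h
    have : X.1 = Pt.mk' _ (hpne X) := (Pt.eq_of_le ((Pt.mk'_le (hpne X)).2 (hp X))).symm
    rw [this, Pt.mk'_le]
    exact h
  have hN1 : ∀ A : {X // X ∈ S.erase C}, A.1 ∈ N → ∀ X, X ≠ A → (p X).1 ≠ (p A).1 := by
    intro A hA X hXA e1
    have hXA' : X.1 ≠ A.1 := fun h => hXA (Subtype.ext h)
    by_cases e2 : (p X).2 = (p A).2
    · have h1 := hp A
      rw [← e1, ← e2] at h1
      exact hXA' (Pt.eq_of_le (hpeq X _ h1))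
    · refine hnuc A.1 hA X.1 (Finset.mem_of_mem_erase X.2) C hC hXA'
        (Finset.ne_of_mem_erase A.2).symm (Finset.ne_of_mem_erase X.2) (X.1.join A.1 hXA')
        le_sup_right le_sup_left ?_
      have h1 : c = ((p X).2 - (p A).2)⁻¹ • ((z + (p X).1 • e + (p X).2 • c) -
          (z + (p A).1 • e + (p A).2 • c)) := by
        rw [e1, add_sub_add_left_eq_sub, ← sub_smul, smul_smul,
          inv_mul_cancel₀ (sub_ne_zero.2 e2), one_smul]
      rw [hc, Submodule.span_singleton_le_iff_mem, h1]
      exact Submodule.smul_mem _ _ (Submodule.sub_mem _ (Submodule.mem_sup_left (hp X))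
        (Submodule.mem_sup_right (hp A)))
  have hι : Fintype.card {X // X ∈ S.erase C} = Fintype.card F + 1 := by
    rw [Fintype.card_coe, Finset.card_erase_of_mem hC, hS]; rfl
  refine no_affine_nuclei (N := Finset.univ.filter fun A : {X // X ∈ S.erase C} => A.1 ∈ N)
    (u := fun X => (p X).1) (w := fun X => (p X).2) hq hι ?_ ?_ ?_
  · have : (Finset.univ.filter fun A : {X // X ∈ S.erase C} => A.1 ∈ N).card = N.card := by
      refine Finset.card_bij (fun A _ => A.1) (fun A hA => (Finset.mem_filter.1 hA).2)
        (fun A _ B _ h => Subtype.ext h) fun A hA => ?_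
      exact ⟨⟨A, Finset.mem_erase.2 ⟨fun h => hCN (h ▸ hA), hNS hA⟩⟩, by simpa using hA, rfl⟩
    rw [this]; exact hN
  · intro A hA X hX
    exact hN1 A (Finset.mem_filter.1 hA).2 X hX
  · intro A hA X Y hX hY hXY h
    have hAN := (Finset.mem_filter.1 hA).2
    have h0 := sub_ne_zero.2 (hN1 A hAN X hX)
    have hX' : X.1 ≠ A.1 := fun h => hX (Subtype.ext h)
    refine hnuc A.1 hAN X.1 (Finset.mem_of_mem_erase X.2) Y.1 (Finset.mem_of_mem_erase Y.2) hX'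
      (fun h => hY (Subtype.ext h)) (fun h => hXY (Subtype.ext h)) (X.1.join A.1 hX')
      le_sup_right le_sup_left (hpeq Y _ ?_)
    set l := ((p Y).1 - (p A).1) / ((p X).1 - (p A).1)
    have hlm : l * ((p X).1 - (p A).1) = (p Y).1 - (p A).1 := div_mul_cancel₀ _ h0
    clear_value l
    have e1 : (p Y).1 = l * (p X).1 + (1 - l) * (p A).1 := by
      linear_combination -hlm
    have e2 : (p Y).2 = l * (p X).2 + (1 - l) * (p A).2 := by
      apply mul_left_cancel₀ h0
      linear_combination h - ((p X).2 - (p A).2) * hlm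
    have e3 : z + (p Y).1 • e + (p Y).2 • c = l • (z + (p X).1 • e + (p X).2 • c) +
        (1 - l) • (z + (p A).1 • e + (p A).2 • c) := by
      rw [e1, e2]
      module
    rw [e3]
    exact Submodule.add_mem _ (Submodule.smul_mem _ _ (Submodule.mem_sup_left (hp X)))
      (Submodule.smul_mem _ _ (Submodule.mem_sup_right (hp A)))

end PlaneNuclei

/-! ### Nonnegativity of the reduced weight -/

section Positivity

variable {F : Type*} [Field F] {f : Pt F → ℤ}

/-- The negative part of a weight. -/
def negw (f : Pt F → ℤ) (P : Pt F) : ℤ := max (-f P) 0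

lemma negw_nonneg (P : Pt F) : 0 ≤ negw f P := le_max_right _ _

lemma neg_le_negw (P : Pt F) : -f P ≤ negw f P := le_max_left _ _

lemma negw_pos {P : Pt F} (h : f P < 0) : 1 ≤ negw f P := by
  have := neg_le_negw (f := f) P; omega

variable [Fintype F]

local notation "q" => (Fintype.card F : ℤ)

lemma wt_mono {g : Pt F → ℤ} (hg : ∀ P, 0 ≤ g P) {U V : Submodule F (Fin 4 → F)} (h : U ≤ V) :
    wt g U ≤ wt g V :=
  Finset.sum_le_sum_of_subset_of_nonneg (fun _ hP => mem_pts.2 ((mem_pts.1 hP).trans h))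
    fun P _ _ => hg P

lemma neg_wt_le (U : Submodule F (Fin 4 → F)) : -wt f U ≤ wt (negw f) U := by
  rw [wt, wt, ← Finset.sum_neg_distrib]
  exact Finset.sum_le_sum fun _ _ => neg_le_negw _

/-- The points of negative weight. -/
def negs (f : Pt F → ℤ) : Finset (Pt F) := Finset.univ.filter fun Z => f Z < 0

lemma card_negs_le : ((negs f).card : ℤ) ≤ wt (negw f) ⊤ := by
  rw [Finset.card_eq_sum_ones]
  push_cast
  refine (Finset.sum_le_sum (g := negw f) fun Z hZ => negw_pos (Finset.mem_filter.1 hZ).2).trans ?_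
  exact Finset.sum_le_sum_of_subset_of_nonneg (fun P _ => mem_pts.2 le_top)
    fun P _ _ => negw_nonneg P

lemma wt_plane_of_line (hline : ∀ L : Ln F, L.1 ≤ perp L.1 → wt f L.1 = 1) (R : Pt F) :
    wt f (perp R.1) = q + 1 - q * f R := by
  have h1 := sum_lns_plane f R.le_perp_self
  rw [Finset.sum_congr rfl fun L hL => hline L (ti_of_mem_lns hL), Finset.sum_const,
    card_lns_plane R.le_perp_self] at h1
  simp at h1
  linarith

lemma wt_add_wt_pol (hline : ∀ L : Ln F, L.1 ≤ perp L.1 → wt f L.1 = 1)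
    (htot : wt f ⊤ = q ^ 2 + 1) (L : Ln F) : wt f L.1 + wt f L.pol.1 = 2 := by
  have h1 := sum_planes f L
  simp only [wt_plane_of_line hline, htot] at h1
  rw [Finset.sum_sub_distrib, ← Finset.mul_sum, Finset.sum_const, card_pts_line, ← wt] at h1
  simp only [nsmul_eq_mul] at h1
  push_cast at h1
  have h4 : q ≠ 0 := by exact_mod_cast Fintype.card_ne_zero
  apply mul_left_cancel₀ h4
  linarith

/-- On a subspace where the weight is `0` or `1`, it counts the points of weight `1`. -/
lemma wt_eq_card (hf1 : ∀ P, f P ≤ 1) {U : Submodule F (Fin 4 → F)}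
    (hU : ∀ P : Pt F, P.1 ≤ U → 0 ≤ f P) :
    wt f U = ((pts U).filter fun P => f P = 1).card := by
  rw [Finset.card_filter, wt]
  push_cast
  refine Finset.sum_congr rfl fun P hP => ?_
  have h1 := hf1 P
  have h2 := hU P (mem_pts.1 hP)
  split_ifs <;> omega

variable [CharP F 2]

/-- A line of negative weight lies in the polar plane of some point of negative weight. Otherwise
some point `P` of weight zero on it is orthogonal to no point of negative weight; the points of
weight one in its polar plane, together with `P`, form a `(q + 2)`-set with more than `q / 2`
internal nuclei, whereas the polar of the given line carries three of them. -/
lemma exists_neg_of_line_neg (hq2 : 2 < Fintype.card F) (hqe : Even (Fintype.card F))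
    (hf1 : ∀ P, f P ≤ 1) (hline : ∀ L : Ln F, L.1 ≤ perp L.1 → wt f L.1 = 1)
    (htot : wt f ⊤ = q ^ 2 + 1) (hs : 6 * wt (negw f) ⊤ < q + 4)
    {h : Ln F} (hneg : wt f h.1 < 0) : ∃ Z : Pt F, f Z < 0 ∧ h.1 ≤ perp Z.1 := by
  by_contra! hno
  have hs0 : 0 ≤ wt (negw f) (⊤ : Submodule F (Fin 4 → F)) :=
    Finset.sum_nonneg fun P _ => negw_nonneg P
  -- a point of weight zero on `h` whose polar plane contains no point of negative weight
  obtain ⟨P, hPh, hP0, hPZ⟩ : ∃ P : Pt F, P.1 ≤ h.1 ∧ f P = 0 ∧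
      ∀ Z : Pt F, f Z < 0 → ¬ Z.1 ≤ perp P.1 := by
    by_contra! hcon
    have hcov : pts h.1 ⊆ ((pts h.1).filter fun P => f P = 1) ∪
        (negs f).biUnion fun Z => (pts h.1).filter fun P => P.1 ≤ perp Z.1 := by
      intro P hP
      rw [Finset.mem_union, Finset.mem_filter, Finset.mem_biUnion]
      by_cases h1 : f P = 1
      · exact Or.inl ⟨hP, h1⟩
      right
      by_cases h0 : f P = 0
      · obtain ⟨Z, hZ, hZP⟩ := hcon P (mem_pts.1 hP) h0
        exact ⟨Z, Finset.mem_filter.2 ⟨Finset.mem_univ _, hZ⟩,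
          Finset.mem_filter.2 ⟨hP, pt_perp_comm.1 hZP⟩⟩
      · refine ⟨P, Finset.mem_filter.2 ⟨Finset.mem_univ _, ?_⟩,
          Finset.mem_filter.2 ⟨hP, P.le_perp_self⟩⟩
        have := hf1 P
        omega
    have h1 := (Finset.card_le_card hcov).trans (Finset.card_union_le _ _)
    have h2 : ((negs f).biUnion fun Z => (pts h.1).filter fun P => P.1 ≤ perp Z.1).card ≤
        (negs f).card := by
      refine Finset.card_biUnion_le.trans ?_
      rw [Finset.card_eq_sum_ones]
      refine Finset.sum_le_sum fun Z hZ => ?_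
      rw [card_meet, if_neg]
      rw [← le_plane_iff]
      exact hno Z (Finset.mem_filter.1 hZ).2
    have h3 : (((pts h.1).filter fun P => f P = 1).card : ℤ) ≤ wt f h.1 + wt (negw f) h.1 := by
      rw [wt, wt, ← Finset.sum_add_distrib, Finset.card_filter]
      push_cast
      refine Finset.sum_le_sum fun X _ => ?_
      have a := negw_nonneg (f := f) X
      have b := neg_le_negw (f := f) X
      split_ifs <;> omega
    have h4 := wt_mono (negw_nonneg (f := f)) (le_top : h.1 ≤ ⊤)
    have h5 := card_negs_le (f := f)
    rw [card_pts_line] at h1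
    omega
  have hU0 : ∀ X : Pt F, X.1 ≤ perp P.1 → 0 ≤ f X := fun X hX => by
    by_contra! hlt
    exact hPZ X hlt hX
  set S1 := (pts (perp P.1)).filter fun X => f X = 1 with hS1
  have hS1c : S1.card = Fintype.card F + 1 := by
    have h1 := wt_eq_card hf1 hU0
    rw [wt_plane_of_line hline, hP0] at h1
    zify
    rw [← h1]; ring
  set S := insert P S1 with hS
  have hPS1 : P ∉ S1 := by simp [hS1, hP0]
  have hSc : S.card = Fintype.card F + 2 := by
    rw [hS, Finset.card_insert_of_notMem hPS1, hS1c]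
  have hSU : ∀ X ∈ S, X.1 ≤ perp P.1 := by
    intro X hX
    rcases Finset.mem_insert.1 hX with rfl | hX
    · exact X.le_perp_self
    · exact mem_pts.1 (Finset.mem_filter.1 hX).1
  set N := S.filter fun X => X = P ∨ ∀ Z : Pt F, f Z < 0 → ¬ Z.1 ≤ perp X.1 with hN
  -- the points outside `N` lie on polars of lines joining `P` to points of negative weight
  have hbad : ((S.filter fun X => ¬ (X = P ∨ ∀ Z : Pt F, f Z < 0 → ¬ Z.1 ≤ perp X.1)).card : ℤ) ≤
      3 * wt (negw f) ⊤ := by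
    set T : Ln F → Finset (Pt F) := fun m =>
      if ∃ Z : Pt F, f Z < 0 ∧ Z.1 ≤ m.1 then (pts m.pol.1).filter fun X => f X = 1 else ∅ with hT
    have hsub : (S.filter fun X => ¬ (X = P ∨ ∀ Z : Pt F, f Z < 0 → ¬ Z.1 ≤ perp X.1)) ⊆
        (lns P ⊤).biUnion T := by
      intro X hX
      obtain ⟨hXS, hX⟩ := Finset.mem_filter.1 hX
      push Not at hX
      obtain ⟨hXP, Z, hZ, hZX⟩ := hX
      have hXS1 := Finset.mem_of_mem_insert_of_ne hXS hXP
      have hne : P ≠ Z := by rintro rfl; omega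
      refine Finset.mem_biUnion.2 ⟨P.join Z hne, mem_lns.2 ⟨le_sup_left, le_top⟩, ?_⟩
      rw [hT]
      simp only
      rw [if_pos ⟨Z, hZ, le_sup_right⟩, Finset.mem_filter, mem_pts, ← le_plane_iff, Pt.join_le]
      exact ⟨⟨pt_perp_comm.1 (hSU X hXS), hZX⟩, (Finset.mem_filter.1 hXS1).2⟩
    have hTc : ∀ m ∈ lns P ⊤, ((T m).card : ℤ) ≤ 3 * wt (negw f) m.1 := by
      intro m hm
      have hm0 : 0 ≤ wt (negw f) m.1 := Finset.sum_nonneg fun P _ => negw_nonneg P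
      rw [hT]
      simp only
      split_ifs with hZ
      · obtain ⟨Z, hZ, hZm⟩ := hZ
        have h1 : 1 ≤ wt (negw f) m.1 := (negw_pos hZ).trans
          (Finset.single_le_sum (f := negw f) (fun P _ => negw_nonneg P) (mem_pts.2 hZm))
        rw [← wt_eq_card hf1 fun X hX => hU0 X (hX.trans (pol_le_plane.2 (mem_lns.1 hm).1))]
        have h2 := wt_add_wt_pol hline htot m
        have h3 := neg_wt_le (f := f) m.1
        omega
      · simp; exact hm0
    have h1 := (Finset.card_le_card hsub).trans Finset.card_biUnion_le
    have h2 := sum_lns_top (negw f) P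
    have h3 : negw f P = 0 := by simp [negw, hP0]
    rw [h3, mul_zero, add_zero] at h2
    rw [← h2, Finset.mul_sum]
    refine le_trans ?_ (Finset.sum_le_sum hTc)
    exact_mod_cast h1
  have hNc : Fintype.card F + 2 ≤ 2 * N.card := by
    have h1 := Finset.card_filter_add_card_filter_not (s := S)
      (fun X => X = P ∨ ∀ Z : Pt F, f Z < 0 → ¬ Z.1 ≤ perp X.1)
    rw [← hN, hSc] at h1
    obtain ⟨k, hk⟩ := hqe
    omega
  have hwt : ∀ (L : Ln F) (T : Finset (Pt F)), L.1 ≤ perp P.1 → (∀ X ∈ T, X.1 ≤ L.1 ∧ f X = 1) →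
      (T.card : ℤ) ≤ wt f L.1 := by
    intro L T hL hT
    rw [wt_eq_card hf1 fun X hX => hU0 X (hX.trans hL)]
    exact_mod_cast Finset.card_le_card fun X hX =>
      Finset.mem_filter.2 ⟨mem_pts.2 (hT X hX).1, (hT X hX).2⟩
  have hnuc : ∀ A ∈ N, ∀ X ∈ S, ∀ Y ∈ S, X ≠ A → Y ≠ A → X ≠ Y → ∀ L : Ln F,
      A.1 ≤ L.1 → X.1 ≤ L.1 → Y.1 ≤ L.1 → False := by
    intro A hA X hX Y hY hXA hYA hXY L hAL hXL hYL
    obtain ⟨hAS, hA⟩ := Finset.mem_filter.1 hA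
    have hLP : L.1 ≤ perp P.1 := Ln.le_plane hXY hXL hYL (hSU X hX) (hSU Y hY)
    have hf : ∀ X ∈ S, X ≠ P → f X = 1 := fun X hX hXP =>
      (Finset.mem_filter.1 (Finset.mem_of_mem_insert_of_ne hX hXP)).2
    have hT : ∀ Z ∈ ({A, X, Y} : Finset (Pt F)).erase P, Z.1 ≤ L.1 ∧ f Z = 1 := by
      intro Z hZ
      obtain ⟨hZP, hZ⟩ := Finset.mem_erase.1 hZ
      simp only [Finset.mem_insert, Finset.mem_singleton] at hZ
      rcases hZ with rfl | rfl | rfl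
      · exact ⟨hAL, hf _ hAS hZP⟩
      · exact ⟨hXL, hf _ hX hZP⟩
      · exact ⟨hYL, hf _ hY hZP⟩
    have hc3 : ({A, X, Y} : Finset (Pt F)).card = 3 :=
      Finset.card_eq_three.2 ⟨A, X, Y, hXA.symm, hYA.symm, hXY, rfl⟩
    have h1 := hwt L _ hLP hT
    by_cases hPL : P.1 ≤ L.1
    · have h2 := hline L (Ln.ti_of hPL hLP)
      have h3 := Finset.pred_card_le_card_erase (a := P) (s := ({A, X, Y} : Finset (Pt F)))
      omega
    · have hPn : P ∉ ({A, X, Y} : Finset (Pt F)) := by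
        simp only [Finset.mem_insert, Finset.mem_singleton]
        rintro (rfl | rfl | rfl) <;> exact hPL (by assumption)
      rw [Finset.erase_eq_of_notMem hPn, hc3] at h1
      have hAP : A ≠ P := by rintro rfl; exact hPL hAL
      have h2 := wt_add_wt_pol hline htot L
      have h3 : 0 ≤ wt f L.pol.1 := by
        refine Finset.sum_nonneg fun Z hZ => ?_
        by_contra! hlt
        exact hA.resolve_left hAP Z hlt ((mem_pts.1 hZ).trans (pol_le_plane.2 hAL))
      push_cast at h1
      omega
  -- the polar of `h` carries three points of `S`
  have hpol : h.pol.1 ≤ perp P.1 := pol_le_plane.2 hPh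
  have h3 : 2 < ((pts h.pol.1).filter fun X => f X = 1).card := by
    have h1 := wt_add_wt_pol hline htot h
    have h2 := wt_eq_card hf1 fun X hX => hU0 X (hX.trans hpol)
    omega
  obtain ⟨C, hC, X, hX, Y, hY, hCX, hCY, hXY⟩ := Finset.two_lt_card.1 h3
  have hm : ∀ X ∈ (pts h.pol.1).filter fun X => f X = 1, X ∈ S ∧ X.1 ≤ h.pol.1 := by
    intro X hX
    obtain ⟨a, b⟩ := Finset.mem_filter.1 hX
    have a := mem_pts.1 a
    exact ⟨Finset.mem_insert_of_mem (Finset.mem_filter.2 ⟨mem_pts.2 (a.trans hpol), b⟩), a⟩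
  exact no_three_collinear hq2 (finrank_plane P) hSU hSc (Finset.filter_subset _ _) hNc hnuc
    (hm C hC).1 (hm X hX).1 (hm Y hY).1 hCX.symm hCY.symm hXY (hm C hC).2 (hm X hX).2 (hm Y hY).2

/-- A weight at most one whose sum over every totally isotropic line is one and whose negative
part is small takes no negative values. If `f Y < 0`, take a point `A` of weight one orthogonal to
`Y`: its polar plane has weight one, but among the `q + 1` lines of that plane through `Y` all but
a few have nonnegative weight, so their total exceeds the value `q * f Y + 1` it should have. -/
lemma weight_nonneg (hq2 : 2 < Fintype.card F) (hqe : Even (Fintype.card F))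
    (hf1 : ∀ P, f P ≤ 1) (hline : ∀ L : Ln F, L.1 ≤ perp L.1 → wt f L.1 = 1)
    (htot : wt f ⊤ = q ^ 2 + 1) (hs : 6 * wt (negw f) ⊤ < q + 4) (Y : Pt F) : 0 ≤ f Y := by
  by_contra! hY
  obtain ⟨t, ht⟩ : (lns Y (perp Y.1)).Nonempty := by
    rw [← Finset.card_pos, card_lns_plane Y.le_perp_self]; omega
  have htti := ti_of_mem_lns ht
  obtain ⟨A, hAt, hA⟩ : ∃ A : Pt F, A.1 ≤ t.1 ∧ f A = 1 := by
    by_contra! hcon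
    have h1 : wt f t.1 ≤ 0 := Finset.sum_nonpos fun P hP => by
      have := hcon P (mem_pts.1 hP)
      have := hf1 P
      omega
    have := hline t htti
    omega
  have hYA : Y.1 ≤ perp A.1 := (mem_lns.1 ht).1.trans (htti.trans (perp_anti hAt))
  set bad := (lns Y (perp A.1)).filter fun h => ∃ Z : Pt F, f Z < 0 ∧ h.1 ≤ perp Z.1 with hbad
  have hbc : bad.card ≤ (negs f).card := by
    have hex : ∀ h ∈ bad, ∃ Z : Pt F, f Z < 0 ∧ h.1 ≤ perp Z.1 := fun h hh =>
      (Finset.mem_filter.1 hh).2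
    have : Nonempty (Pt F) := ⟨Y⟩
    choose! φ h1 h2 using hex
    refine Finset.card_le_card_of_injOn φ (fun h hh => by
      simpa [negs] using h1 h hh) fun h hh h' hh' e => ?_
    have a := (mem_lns.1 (Finset.mem_filter.1 (Finset.mem_coe.1 hh)).1).2
    have a' := (mem_lns.1 (Finset.mem_filter.1 (Finset.mem_coe.1 hh')).1).2
    have b := h2 h hh
    have b' := h2 h' hh'
    rw [← e] at b'
    have hne : φ h ≠ A := by
      intro e
      have := h1 h hh
      rw [e] at this
      omega
    have := Ln.unique hne (le_plane_iff.1 b) (le_plane_iff.1 a) (le_plane_iff.1 b')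
      (le_plane_iff.1 a')
    rw [← Ln.pol_pol h, this, Ln.pol_pol]
  have h1 := sum_lns_plane f hYA
  rw [wt_plane_of_line hline, hA] at h1
  have h2 := sum_lns_plane (negw f) hYA
  have h3 : wt (negw f) (perp A.1) ≤ wt (negw f) ⊤ := wt_mono negw_nonneg le_top
  have h4 : ∑ h ∈ lns Y (perp A.1), (-(if h ∈ bad then negw f Y else 0) -
      (wt (negw f) h.1 - negw f Y)) ≤ ∑ h ∈ lns Y (perp A.1), wt f h.1 := by
    refine Finset.sum_le_sum fun h hh => ?_
    have a := neg_wt_le (f := f) h.1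
    split_ifs with hb
    · omega
    · have b : negw f Y ≤ wt (negw f) h.1 := Finset.single_le_sum (f := negw f)
        (fun P _ => negw_nonneg P) (mem_pts.2 (mem_lns.1 hh).1)
      have c : 0 ≤ wt f h.1 := by
        by_contra! hlt
        exact hb (Finset.mem_filter.2
          ⟨hh, exists_neg_of_line_neg hq2 hqe hf1 hline htot hs hlt⟩)
      omega
  rw [Finset.sum_sub_distrib, Finset.sum_sub_distrib, Finset.sum_neg_distrib, ← Finset.sum_filter,
    Finset.sum_const, Finset.sum_const, card_lns_plane hYA, h1, h2] at h4
  have h5 : (lns Y (perp A.1)).filter (fun h => h ∈ bad) = bad := by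
    ext h; simp [hbad]
  rw [h5] at h4
  simp only [nsmul_eq_mul] at h4
  push_cast at h4
  have h6 := card_negs_le (f := f)
  have h7 := negw_pos hY
  have h8 : negw f Y = -f Y := by simp [negw]; omega
  have h9 : (bad.card : ℤ) ≤ wt (negw f) ⊤ := by
    refine le_trans ?_ h6; exact_mod_cast hbc
  have h10 : (bad.card : ℤ) * negw f Y ≤ wt (negw f) ⊤ * negw f Y :=
    mul_le_mul_of_nonneg_right h9 (by omega)
  rw [h8] at h4 h7 h10
  have : (2 : ℤ) < q := by exact_mod_cast hq2
  nlinarith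

/-- A blocking set of `W(q)`, `q` even, of size `q ^ 2 + 1 + n` with `6 n < q + 4` contains an
ovoid. -/
lemma blocking_contains_ovoid (hq2 : 2 < Fintype.card F) (hqe : Even (Fintype.card F)) (n : ℕ)
    (hn : 6 * n < Fintype.card F + 4) (B : Finset (Pt F)) (hB : B.card = Fintype.card F ^ 2 + 1 + n)
    (hblock : ∀ L : Ln F, L.1 ≤ perp L.1 → ∃ P ∈ B, P.1 ≤ L.1) :
    ∃ O ⊆ B, ∀ L : Ln F, L.1 ≤ perp L.1 → ∃! P : Pt F, P ∈ O ∧ P.1 ≤ L.1 := by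
  set g : Pt F → ℤ := fun P => if P ∈ B then 1 else 0 with hg
  have hgtot : wt g ⊤ = q ^ 2 + 1 + n := by
    have : pts (⊤ : Submodule F (Fin 4 → F)) = Finset.univ := by ext; simp
    rw [wt, this, hg]
    simp [hB]
  have hg0 : ∀ P, 0 ≤ g P := fun P => by simp only [hg]; split_ifs <;> simp
  obtain ⟨E, hE0, hE1, hE2⟩ := exists_decomposition n g hgtot (fun L hL => by
    obtain ⟨P, hP, hPL⟩ := hblock L hL
    refine le_trans (by simp [hg, hP]) (Finset.single_le_sum (f := g) (fun P _ => hg0 P)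
      (mem_pts.2 hPL))) (by exact_mod_cast hn)
  set f : Pt F → ℤ := fun P => g P - E P with hf
  have hf1 : ∀ P, f P ≤ 1 := by
    intro P
    have := hE0 P
    have : g P ≤ 1 := by simp only [hg]; split_ifs <;> simp
    simp only [hf]; omega
  have hftot : wt f ⊤ = q ^ 2 + 1 := by rw [hf, wt_sub, hgtot, hE1]; ring
  have hneg : wt (negw f) ⊤ ≤ n := by
    rw [← hE1]
    refine Finset.sum_le_sum fun P _ => max_le ?_ (hE0 P)
    have := hg0 P
    simp only [hf]; omega
  have hf0 := weight_nonneg hq2 hqe hf1 hE2 hftot (by omega)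
  refine ⟨B.filter fun P => f P = 1, Finset.filter_subset _ _, fun L hL => ?_⟩
  have h1 := hE2 L hL
  rw [wt_eq_card hf1 fun P _ => hf0 P] at h1
  obtain ⟨P, hP⟩ := Finset.card_eq_one.1 (by exact_mod_cast h1)
  have hiff : ∀ X, (X ∈ B.filter fun P => f P = 1) ∧ X.1 ≤ L.1 ↔ X = P := by
    intro X
    rw [← Finset.mem_singleton, ← hP, Finset.mem_filter, Finset.mem_filter, mem_pts]
    constructor
    · rintro ⟨⟨-, h⟩, h'⟩; exact ⟨h', h⟩
    · rintro ⟨h', h⟩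
      refine ⟨⟨?_, h⟩, h'⟩
      by_contra hXB
      have := hE0 X
      simp [hf, hg, hXB] at h
      omega
  exact ⟨P, (hiff P).2 rfl, fun X hX => (hiff X).1 hX⟩

end Positivity

/-! ### Projection from the nucleus -/

section Transfer

variable {F : Type*} [Field F] [Fintype F]

/-- The theorem on blocking sets of `W(q)`, transported along an isomorphism of incidence
structures. -/
lemma transfer [CharP F 2] {α β : Type*} (I : α → β → Prop) (e : α ≃ Pt F) (m : β → Ln F)
    (hti : ∀ b, (m b).1 ≤ perp (m b).1) (hsurj : ∀ L : Ln F, L.1 ≤ perp L.1 → ∃ b, m b = L)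
    (hI : ∀ a b, I a b ↔ (e a).1 ≤ (m b).1)
    {n : ℕ} (hn0 : 0 < n) (hn : 6 * n < Fintype.card F + 4) (hqe : Even (Fintype.card F))
    (C : Set α) (hC : ∀ b, ∃ a ∈ C, I a b) (hcard : C.ncard = Fintype.card F ^ 2 + 1 + n) :
    ∃ S ⊆ C, ∀ b, ∃! a, a ∈ S ∧ I a b := by
  have hfin : C.Finite := Set.finite_of_ncard_ne_zero (by omega)
  obtain ⟨O, hO, hu⟩ := blocking_contains_ovoid (F := F) (by omega) hqe n hn
    (hfin.toFinset.map e.toEmbedding)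
    (by rw [Finset.card_map, ← Set.ncard_eq_toFinset_card C hfin, hcard])
    (by
      intro L hL
      obtain ⟨b, rfl⟩ := hsurj L hL
      obtain ⟨a, ha, hab⟩ := hC b
      exact ⟨e a, by simpa using ha, (hI a b).1 hab⟩)
  refine ⟨{a | e a ∈ O}, ?_, fun b => ?_⟩
  · intro a ha
    simpa using hO ha
  · obtain ⟨P, ⟨hP, hPb⟩, huniq⟩ := hu (m b) (hti b)
    refine ⟨e.symm P, ⟨by simpa using hP, (hI _ _).2 (by simpa using hPb)⟩, ?_⟩
    rintro a ⟨ha, hab⟩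
    rw [← huniq (e a) ⟨ha, (hI a b).1 hab⟩]
    simp

end Transfer

section Projection

variable {F : Type*} [Field F]

/-- The projection of `F^5` from the nucleus `⟨e₄⟩` of the parabolic form. -/
def proj (F : Type*) [Field F] : (Fin 5 → F) →ₗ[F] (Fin 4 → F) :=
  LinearMap.funLeft F F Fin.castSucc

lemma proj_apply (v : Fin 5 → F) (i : Fin 4) : proj F v i = v i.castSucc := rfl

lemma Q4Form_add [CharP F 2] (v w : Fin 5 → F) :
    Q4Form F (v + w) = Q4Form F v + Q4Form F w + symp F (proj F v) (proj F w) := by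
  simp only [Q4Form, symp_apply, proj_apply, Pi.add_apply, CharTwo.sub_eq_add]
  rw [CharTwo.add_sq]
  simp
  ring

lemma Q4Form_smul (c : F) (v : Fin 5 → F) : Q4Form F (c • v) = c ^ 2 * Q4Form F v := by
  simp only [Q4Form, Pi.smul_apply, smul_eq_mul]; ring

lemma eq_of_proj [CharP F 2] {v w : Fin 5 → F} (hv : Q4Form F v = 0) (hw : Q4Form F w = 0)
    (h : proj F v = proj F w) : v = w := by
  have hi : ∀ i : Fin 4, v i.castSucc = w i.castSucc := fun i => congrFun h i
  have h0 := hi 0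
  have h1 := hi 1
  have h2 := hi 2
  have h3 := hi 3
  simp at h0 h1 h2 h3
  have h4 : v 4 ^ 2 = w 4 ^ 2 := by
    simp only [Q4Form, h0, h1, h2, h3] at hv hw
    linear_combination hv - hw
  have h5 : v 4 = w 4 := CharTwo.sq_inj.1 h4
  ext i
  fin_cases i <;> assumption

lemma finrank_map_proj [CharP F 2] {W : Submodule F (Fin 5 → F)} (hW : ∀ v ∈ W, Q4Form F v = 0) :
    Module.finrank F (W.map (proj F)) = Module.finrank F W := by
  rw [← LinearMap.range_domRestrict]
  apply LinearMap.finrank_range_of_inj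
  intro v w h
  exact Subtype.ext (eq_of_proj (hW _ v.2) (hW _ w.2) h)

lemma map_proj_ti [CharP F 2] {W : Submodule F (Fin 5 → F)} (hW : ∀ v ∈ W, Q4Form F v = 0) :
    W.map (proj F) ≤ perp (W.map (proj F)) := by
  rintro _ ⟨v, hv, rfl⟩ _ ⟨w, hw, rfl⟩
  have := Q4Form_add w v
  rw [hW _ (W.add_mem hw hv), hW _ hw, hW _ hv] at this
  simpa using this.symm

lemma map_proj_le [CharP F 2] {W W' : Submodule F (Fin 5 → F)} (hW : ∀ v ∈ W, Q4Form F v = 0)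
    (hW' : ∀ v ∈ W', Q4Form F v = 0) : W.map (proj F) ≤ W'.map (proj F) ↔ W ≤ W' := by
  refine ⟨fun h v hv => ?_, fun h => Submodule.map_mono h⟩
  obtain ⟨w, hw, hvw⟩ := h ⟨v, hv, rfl⟩
  rwa [← eq_of_proj (hW' w hw) (hW v hv) hvw]

/-- Every totally isotropic subspace of `W(q)` lifts to a totally singular one, since every
element of a finite field of characteristic two is a square. -/
lemma exists_lift [Fintype F] [CharP F 2] {U : Submodule F (Fin 4 → F)} (hU : U ≤ perp U) :
    ∃ W : Submodule F (Fin 5 → F), (∀ v ∈ W, Q4Form F v = 0) ∧ W.map (proj F) = U := by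
  refine ⟨{ carrier := {v | proj F v ∈ U ∧ Q4Form F v = 0}
            add_mem' := ?_, zero_mem' := ?_, smul_mem' := ?_ }, fun v hv => hv.2, ?_⟩
  · rintro v w ⟨hv, hv0⟩ ⟨hw, hw0⟩
    refine ⟨by rw [map_add]; exact U.add_mem hv hw, ?_⟩
    rw [Q4Form_add, hv0, hw0, hU hw _ hv]; simp
  · exact ⟨by simp, by simp [Q4Form]⟩
  · rintro c v ⟨hv, hv0⟩
    exact ⟨by rw [map_smul]; exact U.smul_mem _ hv, by rw [Q4Form_smul, hv0, mul_zero]⟩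
  · apply le_antisymm
    · rintro _ ⟨v, hv, rfl⟩
      exact hv.1
    · intro u hu
      obtain ⟨s, hs⟩ := FiniteField.isSquare_of_char_two (ringChar.eq F 2)
        (u 0 * u 1 + u 2 * u 3)
      have hp : proj F (Fin.snoc u s : Fin 5 → F) = u := by
        ext i; rw [proj_apply]; simp
      refine ⟨Fin.snoc u s, ⟨by rw [hp]; exact hu, ?_⟩, hp⟩
      have hi : ∀ i : Fin 4, (Fin.snoc u s : Fin 5 → F) i.castSucc = u i :=
        fun i => congrFun hp i
      have h0 := hi 0
      have h1 := hi 1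
      have h2 := hi 2
      have h3 := hi 3
      have h4 : (Fin.snoc u s : Fin 5 → F) 4 = s := Fin.snoc_last (α := fun _ => F) s u
      simp only [Fin.castSucc_zero, Fin.reduceCastSucc, Fin.castSucc_one] at h0 h1 h2 h3
      simp only [Q4Form, h0, h1, h2, h3, h4]
      rw [hs, sq, CharTwo.add_self_eq_zero]

theorem blocking_half [Fintype F] [CharP F 2] {n : ℕ} (hn0 : 0 < n) (hn : 6 * n < Fintype.card F + 4)
    (hqe : Even (Fintype.card F)) (B : Set (Q4Point F))
    (hB : ∀ L : Q4Line F, ∃ P ∈ B, P.1 ≤ L.1)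
    (hcard : B.ncard = Fintype.card F ^ 2 + 1 + n) :
    ∃ O ⊆ B, ∀ L : Q4Line F, ∃! P : Q4Point F, P ∈ O ∧ P.1 ≤ L.1 := by
  let e : Q4Point F → Pt F := fun P =>
    ⟨P.1.map (proj F), by rw [finrank_map_proj P.2.2, P.2.1]⟩
  let m : Q4Line F → Ln F := fun L =>
    ⟨L.1.map (proj F), by rw [finrank_map_proj L.2.2, L.2.1]⟩
  have he : Function.Bijective e := by
    constructor
    · intro P Q h
      have h' : P.1.map (proj F) = Q.1.map (proj F) := congrArg Subtype.val h
      exact Subtype.ext (le_antisymm ((map_proj_le P.2.2 Q.2.2).1 h'.le)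
        ((map_proj_le Q.2.2 P.2.2).1 h'.ge))
    · intro P
      obtain ⟨W, hW, h⟩ := exists_lift P.le_perp_self
      exact ⟨⟨W, by rw [← finrank_map_proj hW, h, P.2], hW⟩, Subtype.ext h⟩
  refine transfer (fun P L => P.1 ≤ L.1) (Equiv.ofBijective e he) m
    (fun L => map_proj_ti L.2.2) ?_ (fun P L => (map_proj_le P.2.2 L.2.2).symm) hn0 hn hqe B hB hcard
  intro L hL
  obtain ⟨W, hW, h⟩ := exists_lift hL
  exact ⟨⟨W, by rw [← finrank_map_proj hW, h, L.2], hW⟩, Subtype.ext h⟩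

end Projection

/-! ### The spin representation and duality -/

section Clifford

variable {F : Type*} [Field F]

/-- The spin representation of `F^5` with its parabolic form `Q` on `F^4`, characterised by the
Clifford relation `cl v (cl v x) = Q v • x`. The signs make it valid in every characteristic. -/
def cl (F : Type*) [Field F] : (Fin 5 → F) →ₗ[F] (Fin 4 → F) →ₗ[F] (Fin 4 → F) :=
  LinearMap.mk₂ F (fun v x =>
    ![v 4 * x 0 + v 0 * x 2 + v 2 * x 3, v 4 * x 1 - v 3 * x 2 + v 1 * x 3,
      v 1 * x 0 - v 2 * x 1 - v 4 * x 2, v 3 * x 0 + v 0 * x 1 - v 4 * x 3])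
    (by intros; ext i; fin_cases i <;> simp <;> ring)
    (by intros; ext i; fin_cases i <;> simp <;> ring)
    (by intros; ext i; fin_cases i <;> simp <;> ring)
    (by intros; ext i; fin_cases i <;> simp <;> ring)

lemma cl_apply (v : Fin 5 → F) (x : Fin 4 → F) : cl F v x =
    ![v 4 * x 0 + v 0 * x 2 + v 2 * x 3, v 4 * x 1 - v 3 * x 2 + v 1 * x 3,
      v 1 * x 0 - v 2 * x 1 - v 4 * x 2, v 3 * x 0 + v 0 * x 1 - v 4 * x 3] := rfl

lemma cl_cl (v : Fin 5 → F) (x : Fin 4 → F) : cl F v (cl F v x) = Q4Form F v • x := by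
  ext i; fin_cases i <;> simp [cl_apply, Q4Form] <;> ring

lemma cl_adjoint (v : Fin 5 → F) (x y : Fin 4 → F) :
    symp F (cl F v x) y = symp F x (cl F v y) := by
  simp [cl_apply, symp_apply]; ring

lemma cl_alternating (v : Fin 5 → F) (x : Fin 4 → F) : symp F x (cl F v x) = 0 := by
  simp [cl_apply, symp_apply]; ring

/-- The polarization of `cl_cl`. -/
lemma cl_anticomm [CharP F 2] (v w : Fin 5 → F) (x : Fin 4 → F) :
    cl F v (cl F w x) + cl F w (cl F v x) = symp F (proj F v) (proj F w) • x := by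
  have h := cl_cl (v + w) x
  rw [Q4Form_add] at h
  simp only [map_add, LinearMap.add_apply, cl_cl, add_smul] at h
  rw [← sub_eq_zero] at h ⊢
  rw [← h]
  abel

/-- The nucleus of the parabolic form acts as a scalar in characteristic two. -/
lemma cl_of_proj_eq_zero [CharP F 2] {v : Fin 5 → F} (h : proj F v = 0) (x : Fin 4 → F) :
    cl F v x = v 4 • x := by
  have hi : ∀ i : Fin 4, v i.castSucc = 0 := fun i => congrFun h i
  have h0 := hi 0
  have h1 := hi 1
  have h2 := hi 2
  have h3 := hi 3
  simp at h0 h1 h2 h3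
  ext i; fin_cases i <;> simp [cl_apply, h0, h1, h2, h3, CharTwo.neg_eq]

/-- The vectors of `F^5` annihilating a subspace of `F^4`. -/
def ann5 (X : Submodule F (Fin 4 → F)) : Submodule F (Fin 5 → F) where
  carrier := {v | ∀ x ∈ X, cl F v x = 0}
  add_mem' hv hw x hx := by rw [map_add, LinearMap.add_apply, hv x hx, hw x hx, add_zero]
  zero_mem' x _ := by simp
  smul_mem' c v hv x hx := by rw [map_smul, LinearMap.smul_apply, hv x hx, smul_zero]

/-- The vectors of `F^4` annihilated by a subspace of `F^5`. -/
def ann4 (W : Submodule F (Fin 5 → F)) : Submodule F (Fin 4 → F) where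
  carrier := {x | ∀ v ∈ W, cl F v x = 0}
  add_mem' hx hy v hv := by rw [map_add, hx v hv, hy v hv, add_zero]
  zero_mem' v _ := by simp
  smul_mem' c x hx v hv := by rw [map_smul, hx v hv, smul_zero]

lemma mem_ann5 {X : Submodule F (Fin 4 → F)} {v : Fin 5 → F} :
    v ∈ ann5 X ↔ ∀ x ∈ X, cl F v x = 0 := Iff.rfl

lemma mem_ann4 {W : Submodule F (Fin 5 → F)} {x : Fin 4 → F} :
    x ∈ ann4 W ↔ ∀ v ∈ W, cl F v x = 0 := Iff.rfl

lemma le_ann_comm {X : Submodule F (Fin 4 → F)} {W : Submodule F (Fin 5 → F)} :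
    W ≤ ann5 X ↔ X ≤ ann4 W :=
  ⟨fun h x hx _ hv => h hv x hx, fun h _ hv x hx => h hx _ hv⟩

lemma mem_ann5_span {x : Fin 4 → F} {v : Fin 5 → F} :
    v ∈ ann5 (Submodule.span F {x}) ↔ cl F v x = 0 := by
  refine ⟨fun h => h x (Submodule.mem_span_singleton_self x), fun h y hy => ?_⟩
  obtain ⟨c, rfl⟩ := Submodule.mem_span_singleton.1 hy
  rw [map_smul, h, smul_zero]

lemma mem_ann4_span {x : Fin 4 → F} {v : Fin 5 → F} :
    x ∈ ann4 (Submodule.span F {v}) ↔ cl F v x = 0 := by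
  refine ⟨fun h => h v (Submodule.mem_span_singleton_self v), fun h w hw => ?_⟩
  obtain ⟨c, rfl⟩ := Submodule.mem_span_singleton.1 hw
  rw [map_smul, LinearMap.smul_apply, h, smul_zero]

lemma Q4Form_eq_zero_of_cl {v : Fin 5 → F} {x : Fin 4 → F} (hx : x ≠ 0) (h : cl F v x = 0) :
    Q4Form F v = 0 := by
  have := cl_cl v x
  rw [h, map_zero] at this
  exact (smul_eq_zero.1 this.symm).resolve_right hx

lemma ann5_singular {x : Fin 4 → F} (hx : x ≠ 0) :
    ∀ v ∈ ann5 (Submodule.span F {x}), Q4Form F v = 0 :=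
  fun _ hv => Q4Form_eq_zero_of_cl hx (mem_ann5_span.1 hv)

lemma finrank_le_two_of_ti {U : Submodule F (Fin 4 → F)} (h : U ≤ perp U) :
    Module.finrank F U ≤ 2 := by
  have := Submodule.finrank_mono h
  rw [finrank_perp] at this
  omega

lemma range_flip_le (x : Fin 4 → F) :
    LinearMap.range ((cl F).flip x) ≤ perp (Submodule.span F {x}) := by
  rintro _ ⟨v, rfl⟩ y hy
  obtain ⟨c, rfl⟩ := Submodule.mem_span_singleton.1 hy
  simp [cl_alternating]

/-- The annihilator of a point of `PG(3,q)` is a line of `Q(4,q)`, and `v ↦ cl v x` maps onto the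
polar plane of `⟨x⟩`: the image lies in the polar plane and the annihilator is totally singular,
so rank-nullity forces equality in both dimension bounds. -/
lemma ann5_span_aux [CharP F 2] {x : Fin 4 → F} (hx : x ≠ 0) :
    Module.finrank F (ann5 (Submodule.span F {x})) = 2 ∧
      LinearMap.range ((cl F).flip x) = perp (Submodule.span F {x}) := by
  have hker : LinearMap.ker ((cl F).flip x) = ann5 (Submodule.span F {x}) := by
    ext v; rw [mem_ann5_span]; rfl
  have h1 := LinearMap.finrank_range_add_finrank_ker ((cl F).flip x)
  have h2 := Submodule.finrank_mono (range_flip_le x)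
  rw [finrank_perp, finrank_span_singleton hx] at h2
  have h3 := finrank_le_two_of_ti (map_proj_ti (ann5_singular hx))
  rw [finrank_map_proj (ann5_singular hx)] at h3
  rw [hker] at h1
  simp only [Module.finrank_fintype_fun_eq_card, Fintype.card_fin] at h1
  refine ⟨by omega, Submodule.eq_of_le_of_finrank_le (range_flip_le x) ?_⟩
  rw [finrank_perp, finrank_span_singleton hx]
  omega

lemma exists_cl_eq [CharP F 2] {x y : Fin 4 → F} (hx : x ≠ 0) (h : symp F x y = 0) :
    ∃ u, y = cl F u x := by
  have : y ∈ LinearMap.range ((cl F).flip x) := by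
    rw [(ann5_span_aux hx).2, mem_perp]
    intro z hz
    obtain ⟨c, rfl⟩ := Submodule.mem_span_singleton.1 hz
    simp [h]
  obtain ⟨u, hu⟩ := this
  exact ⟨u, hu.symm⟩

/-- Two vectors killed by the same nonzero `v` are orthogonal. -/
lemma symp_eq_zero_of_cl [CharP F 2] {v : Fin 5 → F} {x y : Fin 4 → F} (hv : v ≠ 0)
    (hx : cl F v x = 0) (hy : cl F v y = 0) : symp F x y = 0 := by
  by_cases hx0 : x = 0
  · simp [hx0]
  have hQ := Q4Form_eq_zero_of_cl hx0 hx
  have hp : proj F v ≠ 0 := fun h => hv (eq_of_proj hQ (by simp [Q4Form]) (by rw [h, map_zero]))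
  obtain ⟨z, hz⟩ : ∃ z, symp F (proj F v) z ≠ 0 := by
    by_contra! h
    exact hp (symp_nondeg.1 _ h)
  obtain ⟨w, rfl⟩ : ∃ w, proj F w = z :=
    ⟨(Fin.snoc z 0 : Fin 5 → F), by ext i; rw [proj_apply]; simp⟩
  have h1 : symp F (cl F v (cl F w x) + cl F w (cl F v x)) y = 0 := by
    rw [hx, map_zero, add_zero, cl_adjoint, hy, map_zero]
  rw [cl_anticomm, map_smul, LinearMap.smul_apply, smul_eq_mul] at h1
  exact (mul_eq_zero.1 h1).resolve_left hz

lemma ann4_ti [CharP F 2] {v : Fin 5 → F} (hv : v ≠ 0) :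
    ann4 (Submodule.span F {v}) ≤ perp (ann4 (Submodule.span F {v})) :=
  fun _ hx _ hy => symp_eq_zero_of_cl hv (mem_ann4_span.1 hy) (mem_ann4_span.1 hx)

lemma finrank_ann4 [CharP F 2] {v : Fin 5 → F} (hv : v ≠ 0) (hQ : Q4Form F v = 0) :
    Module.finrank F (ann4 (Submodule.span F {v})) = 2 := by
  have hker : LinearMap.ker (cl F v) = ann4 (Submodule.span F {v}) := by
    ext x; rw [mem_ann4_span]; rfl
  have h1 := LinearMap.finrank_range_add_finrank_ker (cl F v)
  have h2 : LinearMap.range (cl F v) ≤ LinearMap.ker (cl F v) := by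
    rintro _ ⟨x, rfl⟩
    rw [LinearMap.mem_ker, cl_cl, hQ, zero_smul]
  have h3 := Submodule.finrank_mono h2
  have h4 := finrank_le_two_of_ti (ann4_ti hv)
  rw [hker] at h1 h3
  simp only [Module.finrank_fintype_fun_eq_card, Fintype.card_fin] at h1
  omega

lemma Pt.ann5_aux [CharP F 2] (X : Pt F) : Module.finrank F (ann5 X.1) = 2 ∧
    ∀ v ∈ ann5 X.1, Q4Form F v = 0 := by
  obtain ⟨x, hx, h⟩ := X.exists_span
  rw [h]
  exact ⟨(ann5_span_aux hx).1, ann5_singular hx⟩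

lemma exists_span_of_Q4Point (P : Q4Point F) :
    ∃ v, v ≠ 0 ∧ Q4Form F v = 0 ∧ P.1 = Submodule.span F {v} := by
  obtain ⟨v, hv, h⟩ := finrank_eq_one_iff'.1 P.2.1
  refine ⟨v, by simpa using hv, P.2.2 _ v.2, ?_⟩
  apply le_antisymm
  · intro w hw
    obtain ⟨c, hc⟩ := h ⟨w, hw⟩
    exact Submodule.mem_span_singleton.2 ⟨c, congrArg Subtype.val hc⟩
  · rw [Submodule.span_singleton_le_iff_mem]; exact v.2

lemma ann4_aux [CharP F 2] (P : Q4Point F) : Module.finrank F (ann4 P.1) = 2 ∧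
    ann4 P.1 ≤ perp (ann4 P.1) := by
  obtain ⟨v, hv, hQ, h⟩ := exists_span_of_Q4Point P
  rw [h]
  exact ⟨finrank_ann4 hv hQ, ann4_ti hv⟩

/-- The line of `Q(4,q)` corresponding to a point of `W(q)`. -/
def dualLine [CharP F 2] (X : Pt F) : Q4Line F := ⟨ann5 X.1, X.ann5_aux⟩

/-- The line of `W(q)` corresponding to a point of `Q(4,q)`. -/
def dualPoint [CharP F 2] (P : Q4Point F) : Ln F := ⟨ann4 P.1, (ann4_aux P).1⟩

/-- A point of `W(q)` is determined by its annihilator: if `y` has the same annihilator as `x`,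
then `y = cl u x` with `u` orthogonal to the annihilator modulo the nucleus, hence `u` lies in
the annihilator modulo the nucleus and `y` is a multiple of `x`. -/
lemma dualLine_injective [CharP F 2] : Function.Injective (dualLine (F := F)) := by
  intro X Y hXY
  have hU : ann5 X.1 = ann5 Y.1 := congrArg Subtype.val hXY
  obtain ⟨x, hx, hX⟩ := X.exists_span
  obtain ⟨y, hy, hY⟩ := Y.exists_span
  have hmem : ∀ v, cl F v x = 0 ↔ cl F v y = 0 := fun v => by
    rw [← mem_ann5_span, ← mem_ann5_span, ← hX, ← hY, hU]
  have hd := X.ann5_aux.1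
  have hs := X.ann5_aux.2
  obtain ⟨v, hv, hv0⟩ := Submodule.exists_mem_ne_zero_of_ne_bot
    (p := ann5 X.1) (by intro h; rw [h] at hd; simp at hd)
  rw [hX] at hv
  obtain ⟨u, hu⟩ := exists_cl_eq hx (symp_eq_zero_of_cl hv0 (mem_ann5_span.1 hv)
    ((hmem v).1 (mem_ann5_span.1 hv)))
  have hperp : proj F u ∈ perp ((ann5 X.1).map (proj F)) := by
    rintro _ ⟨w, hw, rfl⟩
    have hw' : cl F w x = 0 := by rw [hX] at hw; exact mem_ann5_span.1 hw
    have h := cl_anticomm w u x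
    rw [← hu, (hmem w).1 hw', hw', map_zero, add_zero] at h
    exact (smul_eq_zero.1 h.symm).resolve_right hx
  have hself : perp ((ann5 X.1).map (proj F)) = (ann5 X.1).map (proj F) := by
    refine (Submodule.eq_of_le_of_finrank_le (map_proj_ti hs) ?_).symm
    rw [finrank_perp, finrank_map_proj hs, hd]
  rw [hself] at hperp
  obtain ⟨w, hw, hwu⟩ := hperp
  have hw' : cl F w x = 0 := by rw [hX] at hw; exact mem_ann5_span.1 hw
  have h0 : proj F (u - w) = 0 := by rw [map_sub, hwu, sub_self]
  have h1 := cl_of_proj_eq_zero h0 x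
  rw [map_sub, LinearMap.sub_apply, hw', sub_zero, ← hu] at h1
  apply Eq.symm
  apply Pt.eq_of_le
  rw [hX, hY, Submodule.span_singleton_le_iff_mem, Submodule.mem_span_singleton]
  exact ⟨_, h1.symm⟩

/-- A line `⟨v, w⟩` of `Q(4,q)` annihilates a point: `w` preserves the kernel of `v` and is
nilpotent there. -/
lemma dualLine_surjective [CharP F 2] : Function.Surjective (dualLine (F := F)) := by
  intro L
  have hL := L.2.2
  obtain ⟨v, w, hv, hw, hv0, hvw⟩ : ∃ v w, v ∈ L.1 ∧ w ∈ L.1 ∧ v ≠ 0 ∧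
      ∀ u ∈ L.1, ∃ a b : F, u = a • v + b • w := by
    let b := Module.finBasisOfFinrankEq F L.1 L.2.1
    refine ⟨b 0, b 1, (b 0).2, (b 1).2, fun h => b.ne_zero 0 (Subtype.ext h), fun u hu => ?_⟩
    have := b.sum_repr ⟨u, hu⟩
    rw [Fin.sum_univ_two] at this
    exact ⟨_, _, (congrArg Subtype.val this).symm⟩
  have hann : symp F (proj F v) (proj F w) = 0 := by
    have := Q4Form_add v w
    rw [hL _ (L.1.add_mem hv hw), hL _ hv, hL _ hw] at this
    simpa using this.symm
  obtain ⟨x, hx, hx1, hx2⟩ : ∃ x, x ≠ 0 ∧ cl F v x = 0 ∧ cl F w x = 0 := by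
    have hd := finrank_ann4 hv0 (hL v hv)
    obtain ⟨y, hy, hy0⟩ := Submodule.exists_mem_ne_zero_of_ne_bot
      (p := ann4 (Submodule.span F {v})) (by intro h; rw [h] at hd; simp at hd)
    rw [mem_ann4_span] at hy
    by_cases h : cl F w y = 0
    · exact ⟨y, hy0, hy, h⟩
    · refine ⟨cl F w y, h, ?_, by rw [cl_cl, hL w hw, zero_smul]⟩
      have := cl_anticomm v w y
      rwa [hann, hy, map_zero, add_zero, zero_smul] at this
  refine ⟨Pt.mk' x hx, ?_⟩
  apply Subtype.ext
  refine (Submodule.eq_of_le_of_finrank_le (S₁ := L.1) ?_ ?_).symm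
  · intro u hu
    obtain ⟨a, b, rfl⟩ := hvw u hu
    refine mem_ann5_span.2 ?_
    simp [hx1, hx2]
  · rw [(dualLine _).2.1, L.2.1]

lemma dualPoint_surjective [CharP F 2] (ℓ : Ln F) (hℓ : ℓ.1 ≤ perp ℓ.1) :
    ∃ P : Q4Point F, dualPoint P = ℓ := by
  obtain ⟨x, y, hx, hy, hx0, hxy⟩ : ∃ x y, x ∈ ℓ.1 ∧ y ∈ ℓ.1 ∧ x ≠ 0 ∧
      ∀ u ∈ ℓ.1, ∃ a b : F, u = a • x + b • y := by
    let b := Module.finBasisOfFinrankEq F ℓ.1 ℓ.2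
    refine ⟨b 0, b 1, (b 0).2, (b 1).2, fun h => b.ne_zero 0 (Subtype.ext h), fun u hu => ?_⟩
    have := b.sum_repr ⟨u, hu⟩
    rw [Fin.sum_univ_two] at this
    exact ⟨_, _, (congrArg Subtype.val this).symm⟩
  obtain ⟨u, hu⟩ := exists_cl_eq hx0 (hℓ hy x hx)
  -- the line of `Q(4,q)` corresponding to `x` contains a point orthogonal to `u`
  obtain ⟨v, hv, hv0, huv⟩ : ∃ v, cl F v x = 0 ∧ v ≠ 0 ∧ symp F (proj F u) (proj F v) = 0 := by
    let φ : ann5 (Submodule.span F {x}) →ₗ[F] F :=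
      ((symp F (proj F u)).comp (proj F)).domRestrict _
    have hker : LinearMap.ker φ ≠ ⊥ := LinearMap.ker_ne_bot_of_finrank_lt
      (by rw [(ann5_span_aux hx0).1, Module.finrank_self]; norm_num)
    obtain ⟨v, hv, hv0⟩ := Submodule.exists_mem_ne_zero_of_ne_bot hker
    exact ⟨v.1, mem_ann5_span.1 v.2, fun h => hv0 (Subtype.ext h), hv⟩
  have hvy : cl F v y = 0 := by
    have := cl_anticomm u v x
    rwa [huv, hv, map_zero, zero_add, zero_smul, ← hu] at this
  have hQ := Q4Form_eq_zero_of_cl hx0 hv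
  refine ⟨⟨Submodule.span F {v}, finrank_span_singleton hv0, ?_⟩, ?_⟩
  · intro w hw
    obtain ⟨c, rfl⟩ := Submodule.mem_span_singleton.1 hw
    rw [Q4Form_smul, hQ, mul_zero]
  · apply Eq.symm
    apply Ln.eq_of_le
    intro z hz
    obtain ⟨a, b, rfl⟩ := hxy z hz
    refine mem_ann4_span.2 ?_
    simp [hv, hvy]

theorem cover_half [Fintype F] [CharP F 2] {n : ℕ} (hn0 : 0 < n)
    (hn : 6 * n < Fintype.card F + 4) (hqe : Even (Fintype.card F)) (C : Set (Q4Line F))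
    (hC : ∀ P : Q4Point F, ∃ L ∈ C, P.1 ≤ L.1)
    (hcard : C.ncard = Fintype.card F ^ 2 + 1 + n) :
    ∃ S ⊆ C, ∀ P : Q4Point F, ∃! L : Q4Line F, L ∈ S ∧ P.1 ≤ L.1 := by
  let e := Equiv.ofBijective (dualLine (F := F)) ⟨dualLine_injective, dualLine_surjective⟩
  refine transfer (fun L P => P.1 ≤ L.1) e.symm dualPoint (fun P => (ann4_aux P).2)
    dualPoint_surjective (fun L P => ?_) hn0 hn hqe C hC hcard
  obtain ⟨X, rfl⟩ := e.surjective L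
  rw [Equiv.symm_apply_apply]
  exact le_ann_comm

end Clifford

/-- A cover of `Q(4,q)`, `q` even, of size `q^2+1+r` with `0 < r < (q+4)/6` contains a
spread; equivalently, a blocking set of `Q(4,q)`, `q` even, of size `q^2+1+r` with
`0 < r < (q+4)/6` contains an ovoid. -/
theorem cover_contains_spread_and_blocking_contains_ovoid
    (q r : ℕ) (hq : Fintype.card F = q) (hqe : Even q)
    (hr0 : 0 < r) (hr : 6 * r < q + 4) :
    (∀ C : Set (Q4Line F), (∀ P : Q4Point F, ∃ L ∈ C, P.1 ≤ L.1) →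
      C.ncard = q ^ 2 + 1 + r →
      ∃ S ⊆ C, ∀ P : Q4Point F, ∃! L : Q4Line F, L ∈ S ∧ P.1 ≤ L.1) ∧
    (∀ B : Set (Q4Point F), (∀ L : Q4Line F, ∃ P ∈ B, P.1 ≤ L.1) →
      B.ncard = q ^ 2 + 1 + r →
      ∃ O ⊆ B, ∀ L : Q4Line F, ∃! P : Q4Point F, P ∈ O ∧ P.1 ≤ L.1) := by
  subst hq
  have h2 : ringChar F = 2 :=
    FiniteField.even_card_iff_char_two.2 (Nat.even_iff.1 hqe)
  have : CharP F 2 := ringChar.of_eq h2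
  exact ⟨fun C hC hcard => cover_half hr0 hr hqe C hC hcard,
    fun B hB hcard => blocking_half hr0 hr hqe B hB hcard⟩
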